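/- Let f: (L,d,λ) → (L′,d′,λ′) and f′: (L′,d′,λ′) → (L″,d″,λ″) be weak morphisms of weak Lie 3-algebras over a commutative ring k. Then their composition f′∘f, with the components given in the context, is a weak morphism (L,d,λ) → (L″,d″,λ″), i.e. its components satisfy equations (M1)–(M8) with respect to λ and λ″. -/

import Mathlib

namespace WL3

open Finset

/-! ## Graded multilinear maps -/

/-- Cast along an equality of degrees. -/
def gcast {M : ℤ → Type} {i j : ℤ} (h : i = j) (x : M i) : M j := h ▸ x

/-- A degree-`r`, arity-`m` map between ℤ-graded types, given by its components on
homogeneous tuples: its component at degrees `d` maps `L (d 1) ⊗ ⋯ ⊗ L (d m)` to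
`M (r + d 1 + ⋯ + d m)`. -/
abbrev MMap (L M : ℤ → Type) (m : ℕ) (r : ℤ) : Type :=
  ∀ d : Fin m → ℤ, (∀ j, L (d j)) → M (r + ∑ j, d j)

variable {L M N : ℤ → Type}

/-- Cast an `MMap` along equalities of arities and degrees. -/
def mcast {m m' : ℕ} {r r' : ℤ} (hm : m = m') (hr : r = r') (μ : MMap L M m r) :
    MMap L M m' r' := by subst hm; subst hr; exact μ

/-- Koszul sign of the permutation `σ` acting on a tuple of homogeneous elements of
degrees `d`: `∏_{i<j, σ i > σ j} (-1)^(d i · d j)`. -/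
def koszulSign {m : ℕ} (d : Fin m → ℤ) (σ : Equiv.Perm (Fin m)) : ℤ :=
  ∏ p ∈ Finset.univ.filter (fun p : Fin m × Fin m => p.1 < p.2 ∧ σ p.2 < σ p.1),
    (-1 : ℤ) ^ (d p.1 * d p.2).natAbs

/-- The action `μ ↦ μ^σ`, `μ^σ(x₁,…,x_m) = ε(σ;x)·μ(x_{σ⁻¹1},…,x_{σ⁻¹m})`. -/
def pa [∀ i, AddCommGroup (M i)] {m : ℕ} {r : ℤ} (σ : Equiv.Perm (Fin m)) (μ : MMap L M m r) :
    MMap L M m r := fun d x =>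
  koszulSign d σ •
    gcast (by rw [Equiv.sum_comp σ.symm d])
      (μ (fun j => d (σ.symm j)) (fun j => x (σ.symm j)))

/-- Degrees of the outer map in a partial composition. -/
def outDeg (m₁ m₂ n : ℕ) (s : ℤ) (d : Fin (m₁ + n + m₂) → ℤ) : Fin (m₁ + 1 + m₂) → ℤ :=
  Fin.append
    (Fin.append (fun j : Fin m₁ => d (Fin.castAdd m₂ (Fin.castAdd n j)))
      (fun _ : Fin 1 => s + ∑ j : Fin n, d (Fin.castAdd m₂ (Fin.natAdd m₁ j))))
    (fun j : Fin m₂ => d (Fin.natAdd (m₁ + n) j))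

theorem outDeg_left (m₁ m₂ n : ℕ) (s : ℤ) (d : Fin (m₁ + n + m₂) → ℤ) (j : Fin m₁) :
    outDeg m₁ m₂ n s d (Fin.castAdd m₂ (Fin.castAdd 1 j))
      = d (Fin.castAdd m₂ (Fin.castAdd n j)) := by
  simp [outDeg, Fin.append_left]

theorem outDeg_mid (m₁ m₂ n : ℕ) (s : ℤ) (d : Fin (m₁ + n + m₂) → ℤ) (j : Fin 1) :
    outDeg m₁ m₂ n s d (Fin.castAdd m₂ (Fin.natAdd m₁ j))
      = s + ∑ j : Fin n, d (Fin.castAdd m₂ (Fin.natAdd m₁ j)) := by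
  simp [outDeg, Fin.append_left, Fin.append_right]

theorem outDeg_right (m₁ m₂ n : ℕ) (s : ℤ) (d : Fin (m₁ + n + m₂) → ℤ) (j : Fin m₂) :
    outDeg m₁ m₂ n s d (Fin.natAdd (m₁ + 1) j) = d (Fin.natAdd (m₁ + n) j) := by
  simp [outDeg, Fin.append_right]

theorem outDeg_sum (m₁ m₂ n : ℕ) (r s : ℤ) (d : Fin (m₁ + n + m₂) → ℤ) :
    r + ∑ j, outDeg m₁ m₂ n s d j = (r + s) + ∑ j, d j := by
  simp [outDeg, Fin.sum_univ_add, Fin.append_left, Fin.append_right]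
  ring

/-- Partial (operadic) composition `μ ∘_{m₁+1} ν` of `μ` (of arity `m₁ + 1 + m₂`) with `ν`
inserted in the slot `m₁ + 1`, with the Koszul sign `(-1)^(|ν|·(d 1 + ⋯ + d m₁))`. -/
def pcomp [∀ i, AddCommGroup (L i)] [∀ i, AddCommGroup (M i)] (m₁ m₂ : ℕ) {n : ℕ} {r s : ℤ}
    (μ : MMap L M (m₁ + 1 + m₂) r) (ν : MMap L L n s) : MMap L M (m₁ + n + m₂) (r + s) :=
  fun d x =>
    ((-1 : ℤ) ^ (s * ∑ j : Fin m₁, d (Fin.castAdd m₂ (Fin.castAdd n j))).natAbs) •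
    gcast (outDeg_sum m₁ m₂ n r s d)
      (μ (outDeg m₁ m₂ n s d)
        (fun j => Fin.addCases (motive := fun t => L (outDeg m₁ m₂ n s d t))
          (fun j' => Fin.addCases (motive := fun t => L (outDeg m₁ m₂ n s d (Fin.castAdd m₂ t)))
            (fun j1 => gcast (outDeg_left m₁ m₂ n s d j1).symm
              (x (Fin.castAdd m₂ (Fin.castAdd n j1))))
            (fun j0 => gcast (outDeg_mid m₁ m₂ n s d j0).symm
              (ν (fun j2 => d (Fin.castAdd m₂ (Fin.natAdd m₁ j2)))
                 (fun j2 => x (Fin.castAdd m₂ (Fin.natAdd m₁ j2)))))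
            j')
          (fun j3 => gcast (outDeg_right m₁ m₂ n s d j3).symm (x (Fin.natAdd (m₁ + n) j3)))
          j))

/-- Composition `μ ∘ g` of an arity-1 map with an arity-`a` map. -/
def comp₁ {a : ℕ} {r s : ℤ} (μ : MMap M N 1 r) (g : MMap L M a s) : MMap L N a (r + s) :=
  fun d x =>
    gcast (by rw [Fin.sum_univ_one]; ring)
      (μ (fun _ : Fin 1 => s + ∑ j, d j) (fun _ => g d x))

theorem sum2 (a b : ℕ) (r s₁ s₂ : ℤ) (d : Fin (a + b) → ℤ) :
    r + ∑ t : Fin 2, ![s₁ + ∑ j : Fin a, d (Fin.castAdd b j),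
                       s₂ + ∑ j : Fin b, d (Fin.natAdd a j)] t
      = (r + (s₁ + s₂)) + ∑ j, d j := by
  simp [Fin.sum_univ_two, Fin.sum_univ_add]
  ring

/-- Full composition `μ ∘ (g₁, g₂)` with Koszul signs. -/
def comp₂ [∀ i, AddCommGroup (N i)] {a b : ℕ} {r s₁ s₂ : ℤ}
    (μ : MMap M N 2 r) (g₁ : MMap L M a s₁) (g₂ : MMap L M b s₂) :
    MMap L N (a + b) (r + (s₁ + s₂)) :=
  fun d x =>
    ((-1 : ℤ) ^ (s₂ * ∑ j : Fin a, d (Fin.castAdd b j)).natAbs) •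
    gcast (sum2 a b r s₁ s₂ d)
      (μ ![s₁ + ∑ j : Fin a, d (Fin.castAdd b j), s₂ + ∑ j : Fin b, d (Fin.natAdd a j)]
        (Fin.cons (gcast (by simp) (g₁ (fun j => d (Fin.castAdd b j)) (fun j => x (Fin.castAdd b j))))
          (fun _ : Fin 1 => gcast (by simp) (g₂ (fun j => d (Fin.natAdd a j)) (fun j => x (Fin.natAdd a j))))))

theorem sum3 (a b c : ℕ) (r s₁ s₂ s₃ : ℤ) (d : Fin (a + b + c) → ℤ) :
    r + ∑ t : Fin 3, ![s₁ + ∑ j : Fin a, d (Fin.castAdd c (Fin.castAdd b j)),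
                       s₂ + ∑ j : Fin b, d (Fin.castAdd c (Fin.natAdd a j)),
                       s₃ + ∑ j : Fin c, d (Fin.natAdd (a + b) j)] t
      = (r + (s₁ + s₂ + s₃)) + ∑ j, d j := by
  simp [Fin.sum_univ_three, Fin.sum_univ_add]
  ring

/-- Full composition `μ ∘ (g₁, g₂, g₃)` with Koszul signs. -/
def comp₃ [∀ i, AddCommGroup (N i)] {a b c : ℕ} {r s₁ s₂ s₃ : ℤ}
    (μ : MMap M N 3 r) (g₁ : MMap L M a s₁) (g₂ : MMap L M b s₂) (g₃ : MMap L M c s₃) :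
    MMap L N (a + b + c) (r + (s₁ + s₂ + s₃)) :=
  fun d x =>
    ((-1 : ℤ) ^ (s₂ * (∑ j : Fin a, d (Fin.castAdd c (Fin.castAdd b j)))
        + s₃ * ((∑ j : Fin a, d (Fin.castAdd c (Fin.castAdd b j)))
          + ∑ j : Fin b, d (Fin.castAdd c (Fin.natAdd a j)))).natAbs) •
    gcast (sum3 a b c r s₁ s₂ s₃ d)
      (μ ![s₁ + ∑ j : Fin a, d (Fin.castAdd c (Fin.castAdd b j)),
           s₂ + ∑ j : Fin b, d (Fin.castAdd c (Fin.natAdd a j)),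
           s₃ + ∑ j : Fin c, d (Fin.natAdd (a + b) j)]
        (Fin.cons (gcast (by simp)
            (g₁ (fun j => d (Fin.castAdd c (Fin.castAdd b j)))
                (fun j => x (Fin.castAdd c (Fin.castAdd b j)))))
          (Fin.cons (gcast (by simp)
              (g₂ (fun j => d (Fin.castAdd c (Fin.natAdd a j)))
                  (fun j => x (Fin.castAdd c (Fin.natAdd a j)))))
            (fun _ : Fin 1 => gcast (by simp)
              (g₃ (fun j => d (Fin.natAdd (a + b) j))
                  (fun j => x (Fin.natAdd (a + b) j)))))))

theorem sum4 (a b c e : ℕ) (r s₁ s₂ s₃ s₄ : ℤ) (d : Fin (a + b + c + e) → ℤ) :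
    r + ∑ t : Fin 4, ![s₁ + ∑ j : Fin a, d (Fin.castAdd e (Fin.castAdd c (Fin.castAdd b j))),
                       s₂ + ∑ j : Fin b, d (Fin.castAdd e (Fin.castAdd c (Fin.natAdd a j))),
                       s₃ + ∑ j : Fin c, d (Fin.castAdd e (Fin.natAdd (a + b) j)),
                       s₄ + ∑ j : Fin e, d (Fin.natAdd (a + b + c) j)] t
      = (r + (s₁ + s₂ + s₃ + s₄)) + ∑ j, d j := by
  simp [Fin.sum_univ_four, Fin.sum_univ_add]
  ring

/-- Full composition `μ ∘ (g₁, g₂, g₃, g₄)` with Koszul signs. -/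
def comp₄ [∀ i, AddCommGroup (N i)] {a b c e : ℕ} {r s₁ s₂ s₃ s₄ : ℤ}
    (μ : MMap M N 4 r) (g₁ : MMap L M a s₁) (g₂ : MMap L M b s₂) (g₃ : MMap L M c s₃)
    (g₄ : MMap L M e s₄) :
    MMap L N (a + b + c + e) (r + (s₁ + s₂ + s₃ + s₄)) :=
  fun d x =>
    ((-1 : ℤ) ^ (s₂ * (∑ j : Fin a, d (Fin.castAdd e (Fin.castAdd c (Fin.castAdd b j))))
        + s₃ * ((∑ j : Fin a, d (Fin.castAdd e (Fin.castAdd c (Fin.castAdd b j))))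
          + ∑ j : Fin b, d (Fin.castAdd e (Fin.castAdd c (Fin.natAdd a j))))
        + s₄ * ((∑ j : Fin a, d (Fin.castAdd e (Fin.castAdd c (Fin.castAdd b j))))
          + (∑ j : Fin b, d (Fin.castAdd e (Fin.castAdd c (Fin.natAdd a j))))
          + ∑ j : Fin c, d (Fin.castAdd e (Fin.natAdd (a + b) j)))).natAbs) •
    gcast (sum4 a b c e r s₁ s₂ s₃ s₄ d)
      (μ ![s₁ + ∑ j : Fin a, d (Fin.castAdd e (Fin.castAdd c (Fin.castAdd b j))),
           s₂ + ∑ j : Fin b, d (Fin.castAdd e (Fin.castAdd c (Fin.natAdd a j))),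
           s₃ + ∑ j : Fin c, d (Fin.castAdd e (Fin.natAdd (a + b) j)),
           s₄ + ∑ j : Fin e, d (Fin.natAdd (a + b + c) j)]
        (Fin.cons (gcast (by simp)
            (g₁ (fun j => d (Fin.castAdd e (Fin.castAdd c (Fin.castAdd b j))))
                (fun j => x (Fin.castAdd e (Fin.castAdd c (Fin.castAdd b j))))))
          (Fin.cons (gcast (by simp)
              (g₂ (fun j => d (Fin.castAdd e (Fin.castAdd c (Fin.natAdd a j))))
                  (fun j => x (Fin.castAdd e (Fin.castAdd c (Fin.natAdd a j))))))
            (Fin.cons (gcast (by simp)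
                (g₃ (fun j => d (Fin.castAdd e (Fin.natAdd (a + b) j)))
                    (fun j => x (Fin.castAdd e (Fin.natAdd (a + b) j)))))
              (fun _ : Fin 1 => gcast (by simp)
                (g₄ (fun j => d (Fin.natAdd (a + b + c) j))
                    (fun j => x (Fin.natAdd (a + b + c) j))))))))

/-- The differential `∂(μ) = D' ∘ μ - (-1)^{|μ|} ∑ᵢ μ ∘ᵢ D`. -/
def bdry [∀ i, AddCommGroup (L i)] [∀ i, AddCommGroup (M i)] {m : ℕ} {r : ℤ}
    (D' : MMap M M 1 (-1)) (D : MMap L L 1 (-1)) (μ : MMap L M m r) : MMap L M m (-1 + r) :=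
  comp₁ D' μ - ((-1 : ℤ) ^ r.natAbs) •
    ∑ p : Fin m, mcast (by have := p.isLt; omega) (by ring)
      (pcomp p.val (m - 1 - p.val) (mcast (by have := p.isLt; omega) rfl μ) D)

/-- The identity, as an `MMap`. -/
def idm : MMap L L 1 0 := fun d x => gcast (by rw [Fin.sum_univ_one, zero_add]) (x 0)

/-- `μ ∘_{m₁+1} ν`, recast to a specified target degree `R`. -/
def pc [∀ i, AddCommGroup (L i)] [∀ i, AddCommGroup (M i)] (R : ℤ) (m₁ m₂ : ℕ) {n : ℕ}
    {r s : ℤ} (μ : MMap L M (m₁ + 1 + m₂) r) (ν : MMap L L n s)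
    (h : r + s = R := by norm_num) : MMap L M (m₁ + n + m₂) R :=
  mcast rfl h (pcomp m₁ m₂ μ ν)

/-- `μ ∘ g`, recast to a specified target degree `R`. -/
def fc1 (R : ℤ) {a : ℕ} {r s : ℤ} (μ : MMap M N 1 r) (g : MMap L M a s)
    (h : r + s = R := by norm_num) : MMap L N a R :=
  mcast rfl h (comp₁ μ g)

/-- `μ ∘ (g₁, g₂)`, recast to a specified target degree `R`. -/
def fc2 [∀ i, AddCommGroup (N i)] (R : ℤ) {a b : ℕ} {r s₁ s₂ : ℤ}
    (μ : MMap M N 2 r) (g₁ : MMap L M a s₁) (g₂ : MMap L M b s₂)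
    (h : r + (s₁ + s₂) = R := by norm_num) : MMap L N (a + b) R :=
  mcast rfl h (comp₂ μ g₁ g₂)

/-- `μ ∘ (g₁, g₂, g₃)`, recast to a specified target degree `R`. -/
def fc3 [∀ i, AddCommGroup (N i)] (R : ℤ) {a b c : ℕ} {r s₁ s₂ s₃ : ℤ}
    (μ : MMap M N 3 r) (g₁ : MMap L M a s₁) (g₂ : MMap L M b s₂) (g₃ : MMap L M c s₃)
    (h : r + (s₁ + s₂ + s₃) = R := by norm_num) : MMap L N (a + b + c) R :=
  mcast rfl h (comp₃ μ g₁ g₂ g₃)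

/-- `μ ∘ (g₁, g₂, g₃, g₄)`, recast to a specified target degree `R`. -/
def fc4 [∀ i, AddCommGroup (N i)] (R : ℤ) {a b c e : ℕ} {r s₁ s₂ s₃ s₄ : ℤ}
    (μ : MMap M N 4 r) (g₁ : MMap L M a s₁) (g₂ : MMap L M b s₂) (g₃ : MMap L M c s₃)
    (g₄ : MMap L M e s₄) (h : r + (s₁ + s₂ + s₃ + s₄) = R := by norm_num) :
    MMap L N (a + b + c + e) R :=
  mcast rfl h (comp₄ μ g₁ g₂ g₃ g₄)

/-- `∂(μ)`, recast to a specified target degree `R`. -/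
def bd [∀ i, AddCommGroup (L i)] [∀ i, AddCommGroup (M i)] (R : ℤ) {m : ℕ} {r : ℤ}
    (D' : MMap M M 1 (-1)) (D : MMap L L 1 (-1)) (μ : MMap L M m r)
    (h : -1 + r = R := by norm_num) : MMap L M m R :=
  mcast rfl h (bdry D' D μ)

/-- Multilinearity over `k` of the components of an `MMap`. -/
def IsMultilinear (k : Type) [CommRing k] {L M : ℤ → Type} [∀ i, AddCommGroup (L i)]
    [∀ i, AddCommGroup (M i)] [∀ i, Module k (L i)] [∀ i, Module k (M i)] {m : ℕ} {r : ℤ}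
    (μ : MMap L M m r) : Prop :=
  ∀ (d : Fin m → ℤ) (x : ∀ j, L (d j)) (j : Fin m),
    (∀ a b : L (d j), μ d (Function.update x j (a + b))
        = μ d (Function.update x j a) + μ d (Function.update x j b)) ∧
    (∀ (c : k) (a : L (d j)), μ d (Function.update x j (c • a)) = c • μ d (Function.update x j a))

/-! ## Permutations (0-indexed; a cycle `(a b c)` is `swap a b * swap b c`) -/

def P12 (m : ℕ) [NeZero m] : Equiv.Perm (Fin m) := Equiv.swap 0 1
def P13 (m : ℕ) [NeZero m] : Equiv.Perm (Fin m) := Equiv.swap 0 2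
def P23 (m : ℕ) [NeZero m] : Equiv.Perm (Fin m) := Equiv.swap 1 2
def P34 (m : ℕ) [NeZero m] : Equiv.Perm (Fin m) := Equiv.swap 2 3
def P123 (m : ℕ) [NeZero m] : Equiv.Perm (Fin m) := Equiv.swap 0 1 * Equiv.swap 1 2
def P132 (m : ℕ) [NeZero m] : Equiv.Perm (Fin m) := Equiv.swap 0 2 * Equiv.swap 2 1
def P234 (m : ℕ) [NeZero m] : Equiv.Perm (Fin m) := Equiv.swap 1 2 * Equiv.swap 2 3
def P243 (m : ℕ) [NeZero m] : Equiv.Perm (Fin m) := Equiv.swap 1 3 * Equiv.swap 3 2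
def P1234 (m : ℕ) [NeZero m] : Equiv.Perm (Fin m) :=
  Equiv.swap 0 1 * Equiv.swap 1 2 * Equiv.swap 2 3
def P1432 (m : ℕ) [NeZero m] : Equiv.Perm (Fin m) :=
  Equiv.swap 0 3 * Equiv.swap 3 2 * Equiv.swap 2 1
def P1342 (m : ℕ) [NeZero m] : Equiv.Perm (Fin m) :=
  Equiv.swap 0 2 * Equiv.swap 2 3 * Equiv.swap 3 1
def P13P24 (m : ℕ) [NeZero m] : Equiv.Perm (Fin m) := Equiv.swap 0 2 * Equiv.swap 1 3

end WL3
namespace WL3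

open Finset

variable (k : Type) [CommRing k]

/-- A Leibniz 3-algebra structure: maps `l2, l3, l4` on a complex with differential `D`
satisfying the generalized Jacobi identities (L1)–(L4). -/
structure IsLeibniz3 {L : ℤ → Type} [∀ i, AddCommGroup (L i)] [∀ i, Module k (L i)]
    (D : MMap L L 1 (-1)) (l2 : MMap L L 2 0) (l3 : MMap L L 3 1) (l4 : MMap L L 4 2) :
    Prop where
  lin2 : IsMultilinear k l2
  lin3 : IsMultilinear k l3
  lin4 : IsMultilinear k l4
  eqL1 : bd (-1) D D l2 = 0
  eqL2 : bd 0 D D l3 =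
    pc 0 1 0 l2 l2 - pc 0 0 1 l2 l2 - pa (P12 3) (pc 0 1 0 l2 l2)
  eqL3 : bd 1 D D l4 =
    pc 1 0 1 l2 l3 + pc 1 1 0 l2 l3 - pa (P12 4) (pc 1 1 0 l2 l3)
      + pa (P123 4) (pc 1 1 0 l2 l3) - pc 1 0 2 l3 l2
      + pc 1 1 1 l3 l2 - pa (P12 4) (pc 1 1 1 l3 l2)
      - pc 1 2 0 l3 l2 + pa (P23 4) (pc 1 2 0 l3 l2) - pa (P132 4) (pc 1 2 0 l3 l2)
  eqL4 : (0 : MMap L L 5 2) =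
    pc 2 0 1 l2 l4 - pc 2 1 0 l2 l4 + pa (P12 5) (pc 2 1 0 l2 l4)
      - pa (P123 5) (pc 2 1 0 l2 l4) + pa (P1234 5) (pc 2 1 0 l2 l4)
      + pc 2 0 2 l3 l3 + pc 2 1 1 l3 l3 - pa (P12 5) (pc 2 1 1 l3 l3)
      + pa (P123 5) (pc 2 1 1 l3 l3) + pc 2 2 0 l3 l3
      - pa (P23 5) (pc 2 2 0 l3 l3) + pa (P132 5) (pc 2 2 0 l3 l3)
      + pa (P234 5) (pc 2 2 0 l3 l3) - pa (P1342 5) (pc 2 2 0 l3 l3)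
      + pa (P13P24 5) (pc 2 2 0 l3 l3)
      + pc 2 0 3 l4 l2 - pc 2 1 2 l4 l2 + pa (P12 5) (pc 2 1 2 l4 l2)
      + pc 2 2 1 l4 l2 - pa (P23 5) (pc 2 2 1 l4 l2) + pa (P132 5) (pc 2 2 1 l4 l2)
      - pc 2 3 0 l4 l2 + pa (P34 5) (pc 2 3 0 l4 l2) - pa (P243 5) (pc 2 3 0 l4 l2)
      + pa (P1432 5) (pc 2 3 0 l4 l2)

/-- A weak Lie 3-algebra: a 3-term chain complex equipped with structure maps
`l2, l3, l4, l21, l211, l31, l32` satisfying (L1)–(L4) and (W1)–(W11). -/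
structure WeakLie3 (L : ℤ → Type) [∀ i, AddCommGroup (L i)] [∀ i, Module k (L i)] where
  D : MMap L L 1 (-1)
  linD : IsMultilinear k D
  dd : fc1 (-2) D D = 0
  bound : ∀ i : ℤ, (i < 0 ∨ 2 < i) → ∀ x : L i, x = 0
  l2 : MMap L L 2 0
  l3 : MMap L L 3 1
  l4 : MMap L L 4 2
  l21 : MMap L L 2 1
  l211 : MMap L L 2 2
  l31 : MMap L L 3 2
  l32 : MMap L L 3 2
  leib : IsLeibniz3 k D l2 l3 l4
  lin21 : IsMultilinear k l21
  lin211 : IsMultilinear k l211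
  lin31 : IsMultilinear k l31
  lin32 : IsMultilinear k l32
  w1 : bd 0 D D l21 = l2 + pa (P12 2) l2
  w2 : bd 1 D D l211 = l21 - pa (P12 2) l21
  w3 : bd 1 D D l31 = l3 + pa (P12 3) l3 + pc 1 0 1 l2 l21
  w4 : bd 1 D D l32 = l3 + pa (P23 3) l3 - pc 1 1 0 l2 l21 + pc 1 0 1 l21 l2
        + pa (P12 3) (pc 1 1 0 l21 l2)
  w5 : l211 + pa (P12 2) l211 = 0
  w6 : l31 - pa (P12 3) l31 = pc 2 0 1 l2 l211
  w7 : l31 - pa (P12 3) l32 + pa (P132 3) l31 - l32 + pa (P23 3) l31 - pa (P123 3) l32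
        = pc 2 1 0 l21 l21 + pc 2 0 1 l21 l21 + pa (P12 3) (pc 2 1 0 l21 l21)
          + pa (P132 3) (pc 2 1 0 l211 l2)
  w8 : l32 - pa (P23 3) l32 = - pc 2 1 0 l2 l211 + pc 2 0 1 l211 l2
        + pa (P12 3) (pc 2 1 0 l211 l2)
  w9 : l4 + pa (P12 4) l4 = pc 2 0 1 l2 l31 - pc 2 2 0 l31 l2
        + pa (P123 4) (pc 2 1 0 l2 l31) + pc 2 0 2 l3 l21
  w10 : l4 + pa (P23 4) l4 = pc 2 0 1 l2 l32 - pc 2 1 1 l3 l21 + pc 2 1 0 l2 l31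
        - pc 2 0 2 l31 l2 - pa (P12 4) (pc 2 1 1 l31 l2) - pa (P132 4) (pc 2 2 0 l31 l2)
  w11 : l4 + pa (P34 4) l4 = pc 2 0 1 l21 l3 - pc 2 0 2 l32 l2 + pc 2 1 1 l32 l2
        - pa (P12 4) (pc 2 1 1 l32 l2) + pc 2 2 0 l3 l21 + pa (P23 4) (pc 2 2 0 l32 l2)
        - pa (P132 4) (pc 2 2 0 l32 l2) + pc 2 1 0 l2 l32 - pa (P12 4) (pc 2 1 0 l2 l32)
        + pa (P123 4) (pc 2 1 0 l21 l3)

end WL3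
namespace WL3

open Finset

variable (k : Type) [CommRing k]

/-- A weak morphism of weak Lie 3-algebras `(f1,f2,f21,f3) : A → B`, i.e. a solution of
equations (M1)–(M8). -/
structure IsWeakMorphism {L M : ℤ → Type} [∀ i, AddCommGroup (L i)] [∀ i, Module k (L i)]
    [∀ i, AddCommGroup (M i)] [∀ i, Module k (M i)]
    (A : WeakLie3 k L) (B : WeakLie3 k M)
    (f1 : MMap L M 1 0) (f2 : MMap L M 2 1) (f21 : MMap L M 2 2) (f3 : MMap L M 3 2) :
    Prop where
  lin1 : IsMultilinear k f1
  lin2 : IsMultilinear k f2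
  lin21 : IsMultilinear k f21
  lin3 : IsMultilinear k f3
  m1 : bd (-1) B.D A.D f1 = 0
  m2 : bd 0 B.D A.D f2 = fc1 0 f1 A.l2 - fc2 0 B.l2 f1 f1
  m3 : bd 1 B.D A.D f3 = fc1 1 f1 A.l3 - pc 1 1 0 f2 A.l2 + pc 1 0 1 f2 A.l2
        + pa (P12 3) (pc 1 1 0 f2 A.l2) - fc3 1 B.l3 f1 f1 f1 - fc2 1 B.l2 f1 f2
        + fc2 1 B.l2 f2 f1 + pa (P12 3) (fc2 1 B.l2 f1 f2)
  m4 : fc1 2 f1 A.l4 - fc4 2 B.l4 f1 f1 f1 f1 =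
        pc 2 0 1 f2 A.l3 + pc 2 1 0 f2 A.l3 - pa (P12 4) (pc 2 1 0 f2 A.l3)
        + pa (P123 4) (pc 2 1 0 f2 A.l3) - pc 2 0 2 f3 A.l2 + pc 2 1 1 f3 A.l2
        - pa (P12 4) (pc 2 1 1 f3 A.l2) - pc 2 2 0 f3 A.l2 + pa (P23 4) (pc 2 2 0 f3 A.l2)
        - pa (P132 4) (pc 2 2 0 f3 A.l2) + fc2 2 B.l2 f3 f1 + fc2 2 B.l2 f1 f3
        - pa (P12 4) (fc2 2 B.l2 f1 f3) + pa (P123 4) (fc2 2 B.l2 f1 f3)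
        - fc2 2 B.l2 f2 f2 + pa (P23 4) (fc2 2 B.l2 f2 f2) - pa (P132 4) (fc2 2 B.l2 f2 f2)
        + fc3 2 B.l3 f2 f1 f1 - fc3 2 B.l3 f1 f2 f1 + pa (P12 4) (fc3 2 B.l3 f1 f2 f1)
        + fc3 2 B.l3 f1 f1 f2 - pa (P23 4) (fc3 2 B.l3 f1 f1 f2)
        + pa (P132 4) (fc3 2 B.l3 f1 f1 f2)
  m5 : bd 1 B.D A.D f21 = - f2 - pa (P12 2) f2 + fc1 1 f1 A.l21 - fc2 1 B.l21 f1 f1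
  m6 : fc1 2 f1 A.l211 - fc2 2 B.l211 f1 f1 = f21 - pa (P12 2) f21
  m7 : fc1 2 f1 A.l31 - fc3 2 B.l31 f1 f1 f1 =
        f3 + pa (P12 3) f3 + pc 2 0 1 f2 A.l21 + fc2 2 B.l2 f21 f1
  m8 : fc1 2 f1 A.l32 - fc3 2 B.l32 f1 f1 f1 =
        f3 + pa (P23 3) f3 - pc 2 1 0 f2 A.l21 + pc 2 0 1 f21 A.l2
        + pa (P12 3) (pc 2 1 0 f21 A.l2) - fc2 2 B.l2 f1 f21 - fc2 2 B.l21 f2 f1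
        - pa (P12 3) (fc2 2 B.l21 f1 f2)

/-- A morphism of (semi-strict) Lie 3-algebras / Leibniz 3-algebras: equations (M1)–(M4)
for structure maps `(a2,a3,a4)` on the source and `(b2,b3,b4)` on the target. -/
structure IsLeibMorphism {L M : ℤ → Type} [∀ i, AddCommGroup (L i)] [∀ i, Module k (L i)]
    [∀ i, AddCommGroup (M i)] [∀ i, Module k (M i)]
    (DL : MMap L L 1 (-1)) (DM : MMap M M 1 (-1))
    (a2 : MMap L L 2 0) (a3 : MMap L L 3 1) (a4 : MMap L L 4 2)
    (b2 : MMap M M 2 0) (b3 : MMap M M 3 1) (b4 : MMap M M 4 2)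
    (f1 : MMap L M 1 0) (f2 : MMap L M 2 1) (f3 : MMap L M 3 2) : Prop where
  lin1 : IsMultilinear k f1
  lin2 : IsMultilinear k f2
  lin3 : IsMultilinear k f3
  m1 : bd (-1) DM DL f1 = 0
  m2 : bd 0 DM DL f2 = fc1 0 f1 a2 - fc2 0 b2 f1 f1
  m3 : bd 1 DM DL f3 = fc1 1 f1 a3 - pc 1 1 0 f2 a2 + pc 1 0 1 f2 a2
        + pa (P12 3) (pc 1 1 0 f2 a2) - fc3 1 b3 f1 f1 f1 - fc2 1 b2 f1 f2
        + fc2 1 b2 f2 f1 + pa (P12 3) (fc2 1 b2 f1 f2)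
  m4 : fc1 2 f1 a4 - fc4 2 b4 f1 f1 f1 f1 =
        pc 2 0 1 f2 a3 + pc 2 1 0 f2 a3 - pa (P12 4) (pc 2 1 0 f2 a3)
        + pa (P123 4) (pc 2 1 0 f2 a3) - pc 2 0 2 f3 a2 + pc 2 1 1 f3 a2
        - pa (P12 4) (pc 2 1 1 f3 a2) - pc 2 2 0 f3 a2 + pa (P23 4) (pc 2 2 0 f3 a2)
        - pa (P132 4) (pc 2 2 0 f3 a2) + fc2 2 b2 f3 f1 + fc2 2 b2 f1 f3
        - pa (P12 4) (fc2 2 b2 f1 f3) + pa (P123 4) (fc2 2 b2 f1 f3)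
        - fc2 2 b2 f2 f2 + pa (P23 4) (fc2 2 b2 f2 f2) - pa (P132 4) (fc2 2 b2 f2 f2)
        + fc3 2 b3 f2 f1 f1 - fc3 2 b3 f1 f2 f1 + pa (P12 4) (fc3 2 b3 f1 f2 f1)
        + fc3 2 b3 f1 f1 f2 - pa (P23 4) (fc3 2 b3 f1 f1 f2)
        + pa (P132 4) (fc3 2 b3 f1 f1 f2)

/-- A deformation retract `(p, i, h)` of `(L, D)` onto `(L', D')`:
`p`, `i` are chain maps, `id - i∘p = D∘h + h∘D` and `p∘i = id`. -/
structure IsDefRetract {L L' : ℤ → Type} [∀ i, AddCommGroup (L i)] [∀ i, Module k (L i)]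
    [∀ i, AddCommGroup (L' i)] [∀ i, Module k (L' i)]
    (D : MMap L L 1 (-1)) (D' : MMap L' L' 1 (-1))
    (p : MMap L L' 1 0) (i : MMap L' L 1 0) (h : MMap L L 1 1) : Prop where
  linp : IsMultilinear k p
  lini : IsMultilinear k i
  linh : IsMultilinear k h
  chainp : bd (-1) D' D p = 0
  chaini : bd (-1) D D' i = 0
  homotopy : idm - fc1 0 i p = fc1 0 D h + fc1 0 h D
  retract : fc1 0 p i = idm

/-- A weak Lie 2-algebra in the sense of Roytenberg (a 2-term truncation of a weak
Lie 3-algebra). -/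
structure WeakLie2 (L : ℤ → Type) [∀ i, AddCommGroup (L i)] [∀ i, Module k (L i)] where
  D : MMap L L 1 (-1)
  linD : IsMultilinear k D
  dd : fc1 (-2) D D = 0
  bound : ∀ i : ℤ, (i < 0 ∨ 1 < i) → ∀ x : L i, x = 0
  l2 : MMap L L 2 0
  l3 : MMap L L 3 1
  l21 : MMap L L 2 1
  lin2 : IsMultilinear k l2
  lin3 : IsMultilinear k l3
  lin21 : IsMultilinear k l21
  e1 : bd (-1) D D l2 = 0
  e2 : bd 0 D D l3 = pc 0 1 0 l2 l2 - pc 0 0 1 l2 l2 - pa (P12 3) (pc 0 1 0 l2 l2)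
  e3 : (0 : MMap L L 4 1) =
    pc 1 0 1 l2 l3 + pc 1 1 0 l2 l3 - pa (P12 4) (pc 1 1 0 l2 l3)
      + pa (P123 4) (pc 1 1 0 l2 l3) - pc 1 0 2 l3 l2
      + pc 1 1 1 l3 l2 - pa (P12 4) (pc 1 1 1 l3 l2)
      - pc 1 2 0 l3 l2 + pa (P23 4) (pc 1 2 0 l3 l2) - pa (P132 4) (pc 1 2 0 l3 l2)
  e4 : bd 0 D D l21 = l2 + pa (P12 2) l2
  e5 : (0 : MMap L L 2 1) = l21 - pa (P12 2) l21
  e6 : (0 : MMap L L 3 1) = l3 + pa (P12 3) l3 + pc 1 0 1 l2 l21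
  e7 : (0 : MMap L L 3 1) = l3 + pa (P23 3) l3 - pc 1 1 0 l2 l21 + pc 1 0 1 l21 l2
        + pa (P12 3) (pc 1 1 0 l21 l2)

end WL3
namespace WL3

open Finset

section Transfer

variable {k : Type} [CommRing k] {L L' : ℤ → Type}
  [∀ i, AddCommGroup (L i)] [∀ i, Module k (L i)]
  [∀ i, AddCommGroup (L' i)] [∀ i, Module k (L' i)]
variable (A : WeakLie3 k L) (p : MMap L L' 1 0) (i : MMap L' L 1 0) (h : MMap L L 1 1)

/-- `h ∘ λ2` -/
def hl2 : MMap L L 2 1 := fc1 1 h A.l2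
/-- `h ∘ λ3` -/
def hl3 : MMap L L 3 2 := fc1 2 h A.l3
/-- `h ∘ λ21` -/
def hl21 : MMap L L 2 2 := fc1 2 h A.l21

/-- Transferred `λ2' = p ∘ λ2 ∘ (i,i)`. -/
def tl2 : MMap L' L' 2 0 := fc1 0 p (fc2 0 A.l2 i i)

/-- Transferred `λ3'`. -/
def tl3 : MMap L' L' 3 1 :=
  fc1 1 p (fc3 1 A.l3 i i i)
  + fc1 1 p (fc3 1 (pc 1 0 1 A.l2 (hl2 A h)
      - (pc 1 1 0 A.l2 (hl2 A h) - pa (P12 3) (pc 1 1 0 A.l2 (hl2 A h)))) i i i)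

/-- Transferred `λ4'`. -/
def tl4 : MMap L' L' 4 2 :=
  fc1 2 p (fc4 2 A.l4 i i i i)
  - fc1 2 p (fc4 2
      (pc 2 0 1 A.l2 (hl3 A h)
        + (pc 2 1 0 A.l2 (hl3 A h) - pa (P12 4) (pc 2 1 0 A.l2 (hl3 A h))
            + pa (P123 4) (pc 2 1 0 A.l2 (hl3 A h)))
        + pc 2 0 2 A.l3 (hl2 A h)
        - (pc 2 1 1 A.l3 (hl2 A h) - pa (P12 4) (pc 2 1 1 A.l3 (hl2 A h)))
        + (pc 2 2 0 A.l3 (hl2 A h) - pa (P23 4) (pc 2 2 0 A.l3 (hl2 A h))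
            + pa (P132 4) (pc 2 2 0 A.l3 (hl2 A h)))) i i i i)
  - fc1 2 p (fc4 2
      (pc 2 0 2 (pc 1 0 1 A.l2 (hl2 A h)) (hl2 A h)
        - (pc 2 1 1 (pc 1 0 1 A.l2 (hl2 A h)) (hl2 A h)
            - pa (P12 4) (pc 2 1 1 (pc 1 0 1 A.l2 (hl2 A h)) (hl2 A h)))
        + (fc2 2 A.l2 (hl2 A h) (hl2 A h) - pa (P23 4) (fc2 2 A.l2 (hl2 A h) (hl2 A h))
            + pa (P132 4) (fc2 2 A.l2 (hl2 A h) (hl2 A h)))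
        + (pc 2 1 1 (pc 1 1 0 A.l2 (hl2 A h)) (hl2 A h)
            - pa (P12 4) (pc 2 1 1 (pc 1 1 0 A.l2 (hl2 A h)) (hl2 A h))
            + pa (P123 4) (pc 2 1 1 (pc 1 1 0 A.l2 (hl2 A h)) (hl2 A h)))
        - (pc 2 2 0 (pc 1 1 0 A.l2 (hl2 A h)) (hl2 A h)
            - pa (P12 4) (pc 2 2 0 (pc 1 1 0 A.l2 (hl2 A h)) (hl2 A h))
            + pa (P123 4) (pc 2 2 0 (pc 1 1 0 A.l2 (hl2 A h)) (hl2 A h))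
            - pa (P23 4) (pc 2 2 0 (pc 1 1 0 A.l2 (hl2 A h)) (hl2 A h))
            + pa (P132 4) (pc 2 2 0 (pc 1 1 0 A.l2 (hl2 A h)) (hl2 A h))
            - pa (P13 4) (pc 2 2 0 (pc 1 1 0 A.l2 (hl2 A h)) (hl2 A h)))) i i i i)

/-- Transferred `λ21' = p ∘ λ21 ∘ (i,i)`. -/
def tl21 : MMap L' L' 2 1 := fc1 1 p (fc2 1 A.l21 i i)

/-- Transferred `λ211' = p ∘ λ211 ∘ (i,i)`. -/
def tl211 : MMap L' L' 2 2 := fc1 2 p (fc2 2 A.l211 i i)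

/-- Transferred `λ31'`. -/
def tl31 : MMap L' L' 3 2 :=
  fc1 2 p (fc3 2 A.l31 i i i) - fc1 2 p (fc3 2 (pc 2 0 1 A.l2 (hl21 A h)) i i i)

/-- Transferred `λ32'`. -/
def tl32 : MMap L' L' 3 2 :=
  fc1 2 p (fc3 2 A.l32 i i i)
  + fc1 2 p (fc3 2 (pc 2 0 1 A.l21 (hl2 A h) + pc 2 1 0 A.l2 (hl21 A h)
      + pa (P12 3) (pc 2 1 0 A.l21 (hl2 A h))) i i i)

/-- Extension of `i`: `i₂ = -h ∘ λ2 ∘ (i,i)`. -/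
def ti2 : MMap L' L 2 1 := - fc1 1 h (fc2 0 A.l2 i i)

/-- Extension of `i`: `i₂₁ = -h ∘ λ21 ∘ (i,i)`. -/
def ti21 : MMap L' L 2 2 := - fc1 2 h (fc2 1 A.l21 i i)

/-- Extension of `i`: `i₃`. -/
def ti3 : MMap L' L 3 2 :=
  - fc1 2 h (fc3 1 A.l3 i i i)
  - fc1 2 h (fc3 1 (pc 1 0 1 A.l2 (hl2 A h)
      - (pc 1 1 0 A.l2 (hl2 A h) - pa (P12 3) (pc 1 1 0 A.l2 (hl2 A h)))) i i i)

end Transfer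

section Skew

variable (k : Type) [CommRing k] [Invertible (2 : k)] [Invertible (3 : k)]
variable {L M : ℤ → Type} [∀ i, AddCommGroup (L i)] [∀ i, Module k (L i)]
  [∀ i, AddCommGroup (M i)] [∀ i, Module k (M i)]

/-- Skew-symmetrization `λ̄2` of a weak Lie 3-algebra. -/
def skew2 (A : WeakLie3 k L) : MMap L L 2 0 :=
  (⅟ (2 : k)) • ∑ σ : Equiv.Perm (Fin 2), (Equiv.Perm.sign σ : ℤ) • pa σ A.l2

/-- Skew-symmetrization `λ̄3` of a weak Lie 3-algebra. -/
def skew3 (A : WeakLie3 k L) : MMap L L 3 1 :=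
  (⅟ (2 : k) * ⅟ (3 : k)) • ∑ σ : Equiv.Perm (Fin 3), (Equiv.Perm.sign σ : ℤ) • pa σ A.l3
  - (⅟ (2 : k) * ⅟ (2 : k) * ⅟ (2 : k) * ⅟ (3 : k)) •
      ∑ σ : Equiv.Perm (Fin 3), (Equiv.Perm.sign σ : ℤ) •
        pa σ (pc 1 0 1 A.l21 A.l2 + pc 1 1 0 A.l21 A.l2)

/-- Skew-symmetrization `λ̄4` of a weak Lie 3-algebra. -/
def skew4 (A : WeakLie3 k L) : MMap L L 4 2 :=
  (⅟ (2 : k) * ⅟ (2 : k) * ⅟ (2 : k) * ⅟ (3 : k)) •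
      ∑ σ : Equiv.Perm (Fin 4), (Equiv.Perm.sign σ : ℤ) • pa σ A.l4
  + (⅟ (2 : k) * ⅟ (2 : k) * ⅟ (2 : k) * ⅟ (2 : k) * ⅟ (3 : k)) •
      ∑ σ : Equiv.Perm (Fin 4), (Equiv.Perm.sign σ : ℤ) •
        pa σ (pc 2 0 1 A.l21 A.l3 - pc 2 0 2 A.l31 A.l2 + pc 2 1 1 A.l32 A.l2
          - pc 2 1 0 A.l21 A.l3 - pc 2 1 1 A.l31 A.l2 + pc 2 2 0 A.l32 A.l2)

/-- Skew-symmetrization `f̄2` of the second component of a weak morphism. -/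
def skewMor2 (f2 : MMap L M 2 1) : MMap L M 2 1 :=
  (⅟ (2 : k)) • ∑ σ : Equiv.Perm (Fin 2), (Equiv.Perm.sign σ : ℤ) • pa σ f2

/-- Skew-symmetrization `f̄3` of the third component of a weak morphism `A → B`. -/
def skewMor3 (A : WeakLie3 k L) (B : WeakLie3 k M) (f1 : MMap L M 1 0) (f2 : MMap L M 2 1)
    (f21 : MMap L M 2 2) (f3 : MMap L M 3 2) : MMap L M 3 2 :=
  (⅟ (2 : k) * ⅟ (3 : k)) • ∑ σ : Equiv.Perm (Fin 3), (Equiv.Perm.sign σ : ℤ) • pa σ f3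
  - (⅟ (2 : k) * ⅟ (2 : k) * ⅟ (2 : k) * ⅟ (3 : k)) •
      ∑ σ : Equiv.Perm (Fin 3), (Equiv.Perm.sign σ : ℤ) •
        pa σ (pc 2 0 1 f21 A.l2 + pc 2 1 0 f21 A.l2
          - fc2 2 B.l21 f2 f1 - fc2 2 B.l21 f1 f2)

end Skew

section Comp

variable {k : Type} [CommRing k] {L M N : ℤ → Type}
  [∀ i, AddCommGroup (L i)] [∀ i, Module k (L i)]
  [∀ i, AddCommGroup (M i)] [∀ i, Module k (M i)]
  [∀ i, AddCommGroup (N i)] [∀ i, Module k (N i)]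

/-- First component of the composition of weak morphisms. -/
def cmp1 (f1' : MMap M N 1 0) (f1 : MMap L M 1 0) : MMap L N 1 0 := fc1 0 f1' f1

/-- Second component of the composition of weak morphisms. -/
def cmp2 (f1' : MMap M N 1 0) (f2' : MMap M N 2 1) (f1 : MMap L M 1 0) (f2 : MMap L M 2 1) :
    MMap L N 2 1 := fc2 1 f2' f1 f1 + fc1 1 f1' f2

/-- `(f'∘f)21` component of the composition of weak morphisms. -/
def cmp21 (f1' : MMap M N 1 0) (f21' : MMap M N 2 2) (f1 : MMap L M 1 0)
    (f21 : MMap L M 2 2) : MMap L N 2 2 := fc2 2 f21' f1 f1 + fc1 2 f1' f21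

/-- Third component of the composition of weak morphisms. -/
def cmp3 (f1' : MMap M N 1 0) (f2' : MMap M N 2 1) (f3' : MMap M N 3 2)
    (f1 : MMap L M 1 0) (f2 : MMap L M 2 1) (f3 : MMap L M 3 2) : MMap L N 3 2 :=
  fc3 2 f3' f1 f1 f1 - fc2 2 f2' f2 f1 + fc2 2 f2' f1 f2 - pa (P12 3) (fc2 2 f2' f1 f2)
    + fc1 2 f1' f3

end Comp

end WL3

/-!
Spread over the total modules `⨁ᵢ L i`, a multilinear graded map is an honest multilinear map, and
the equations (M1)–(M8) become equations between homogeneous elements. Those between maps of degree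
2, namely (M4) and (M6)–(M8), have content on elements of degree 0 only, as the complexes
live in degrees 0, 1, 2.

Each equation for `f' ∘ f` is then `f₁'` applied to the same equation for `f`, plus the same
equation for `f'` at values of `f₁`, plus corrections: (M2), (M3) and (M5) for `f'` with a value of
`f₂`, `f₂₁` or `f₃` among the arguments, and (M2), (M3) and (M5) for `f` inserted into `f₂'`,
`f₂₁'` or `f₃'`. Terms of `f'` that would land in degree 3 vanish.
-/

namespace WL3

open Finset

section Currying

variable {R U V W : Type} [CommRing R] [AddCommGroup U] [Module R U] [AddCommGroup V] [Module R V]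
  [AddCommGroup W] [Module R W]

/-- A multilinear map in one variable as a linear map. -/
def curry₁ : MultilinearMap R (fun _ : Fin 1 => V) W →ₗ[R] V →ₗ[R] W :=
  (MultilinearMap.ofSubsingletonₗ R R V W (0 : Fin 1)).symm.toLinearMap

/-- A multilinear map in two variables as an iterated linear map. -/
def curry₂ : MultilinearMap R (fun _ : Fin 2 => V) W →ₗ[R] V →ₗ[R] V →ₗ[R] W :=
  LinearMap.compRight R curry₁ ∘ₗ (multilinearCurryLeftEquiv R (fun _ : Fin 2 => V) W).toLinearMap

/-- A multilinear map in three variables as an iterated linear map. -/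
def curry₃ : MultilinearMap R (fun _ : Fin 3 => V) W →ₗ[R] V →ₗ[R] V →ₗ[R] V →ₗ[R] W :=
  LinearMap.compRight R curry₂ ∘ₗ (multilinearCurryLeftEquiv R (fun _ : Fin 3 => V) W).toLinearMap

/-- A multilinear map in four variables as an iterated linear map. -/
def curry₄ :
    MultilinearMap R (fun _ : Fin 4 => V) W →ₗ[R] V →ₗ[R] V →ₗ[R] V →ₗ[R] V →ₗ[R] W :=
  LinearMap.compRight R curry₃ ∘ₗ (multilinearCurryLeftEquiv R (fun _ : Fin 4 => V) W).toLinearMap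

theorem curry₁_apply (F : MultilinearMap R (fun _ : Fin 1 => V) W) (v : Fin 1 → V) :
    curry₁ F (v 0) = F v :=
  congrArg F (funext fun t => by fin_cases t; rfl)

theorem curry₂_apply (F : MultilinearMap R (fun _ : Fin 2 => V) W) (v : Fin 2 → V) :
    curry₂ F (v 0) (v 1) = F v :=
  congrArg F (funext fun t => by fin_cases t <;> rfl)

theorem curry₃_apply (F : MultilinearMap R (fun _ : Fin 3 => V) W) (v : Fin 3 → V) :
    curry₃ F (v 0) (v 1) (v 2) = F v :=
  congrArg F (funext fun t => by fin_cases t <;> rfl)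

theorem curry₄_apply (F : MultilinearMap R (fun _ : Fin 4 => V) W) (v : Fin 4 → V) :
    curry₄ F (v 0) (v 1) (v 2) (v 3) = F v :=
  congrArg F (funext fun t => by fin_cases t <;> rfl)

/-- The multilinear map `X ↦ F (X₁, …, X_a) (G (X_{a+1}, …, X_{a+b}))`. -/
def blockApply {a b : ℕ} (F : MultilinearMap R (fun _ : Fin a => U) (V →ₗ[R] W))
    (G : MultilinearMap R (fun _ : Fin b => U) V) :
    MultilinearMap R (fun _ : Fin (a + b) => U) W :=
  (MultilinearMap.uncurrySum (N := fun _ : Fin a ⊕ Fin b => U)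
    { toFun := fun u => (F u).compMultilinearMap G
      map_update_add' := fun u i x y => by ext; simp
      map_update_smul' := fun u i c x => by ext; simp }).domDomCongr finSumFinEquiv

/-- The multilinear map `X ↦ F (X₁, …, X_a, G (X_{a+1}, …, X_{a+n}), X_{a+n+1}, …, X_{a+n+b})`. -/
def blockInsert {a b n : ℕ} (F : MultilinearMap R (fun _ : Fin (a + 1 + b) => U) W)
    (G : MultilinearMap R (fun _ : Fin n => U) U) :
    MultilinearMap R (fun _ : Fin (a + n + b) => U) W :=
  (MultilinearMap.uncurrySum (N := fun _ : Fin (a + n) ⊕ Fin b => U) (blockApply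
    (curry₁.compMultilinearMap (MultilinearMap.currySum (N := fun _ : Fin a ⊕ Fin 1 => U)
      ((MultilinearMap.currySum (N := fun _ : Fin (a + 1) ⊕ Fin b => U)
        (F.domDomCongr finSumFinEquiv.symm)).domDomCongr finSumFinEquiv.symm)))
    G)).domDomCongr finSumFinEquiv

theorem blockInsert_apply {a b n : ℕ} (F : MultilinearMap R (fun _ : Fin (a + 1 + b) => U) W)
    (G : MultilinearMap R (fun _ : Fin n => U) U) (X : Fin (a + n + b) → U) :
    blockInsert F G X =
      F (Fin.append
        (Fin.append (fun j => X (Fin.castAdd b (Fin.castAdd n j)))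
          fun _ => G fun j => X (Fin.castAdd b (Fin.natAdd a j)))
        fun j => X (Fin.natAdd (a + n) j)) := by
  refine congrArg F (funext fun t => ?_)
  refine Fin.addCases (Fin.addCases (fun t => ?_) fun t => ?_) (fun t => ?_) t <;> simp

end Currying

section Total

/-- The total module `⨁ᵢ L i` of a graded module. Read there, identities between homogeneous
elements involve no casts between equal degrees. -/
abbrev Total (L : ℤ → Type) [∀ i, AddCommGroup (L i)] : Type := Π₀ i : ℤ, L i

/-- A tuple of homogeneous elements as a tuple in the total module. -/
def singles {L : ℤ → Type} [∀ i, AddCommGroup (L i)] {m : ℕ} (d : Fin m → ℤ)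
    (x : ∀ j, L (d j)) : Fin m → Total L :=
  fun j => DFinsupp.single (d j) (x j)

variable {L M : ℤ → Type}

section Value

variable [∀ i, AddCommGroup (M i)]

/-- The value of a graded map on a tuple of homogeneous elements, in the total module. -/
def value {m : ℕ} {r : ℤ} (μ : MMap L M m r) (d : Fin m → ℤ) (x : ∀ j, L (d j)) : Total M :=
  DFinsupp.single (r + ∑ j, d j) (μ d x)

theorem value_ext {m : ℕ} {r : ℤ} {μ ν : MMap L M m r} :
    μ = ν ↔ ∀ d x, value μ d x = value ν d x :=
  ⟨fun h _ _ => h ▸ rfl, fun h => funext₂ fun d x => DFinsupp.single_injective (h d x)⟩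

theorem single_gcast {i j : ℤ} (h : i = j) (x : M i) :
    (DFinsupp.single j (gcast h x) : Total M) = DFinsupp.single i x := by
  subst h; rfl

@[simp] theorem value_add {m : ℕ} {r : ℤ} (μ ν : MMap L M m r) (d x) :
    value (μ + ν) d x = value μ d x + value ν d x := by simp [value]

@[simp] theorem value_sub {m : ℕ} {r : ℤ} (μ ν : MMap L M m r) (d x) :
    value (μ - ν) d x = value μ d x - value ν d x := by simp [value]

@[simp] theorem value_neg {m : ℕ} {r : ℤ} (μ : MMap L M m r) (d x) :
    value (-μ) d x = -value μ d x := by simp [value]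

@[simp] theorem value_zero {m : ℕ} {r : ℤ} (d x) : value (0 : MMap L M m r) d x = 0 := by
  simp [value]

@[simp] theorem value_zsmul {m : ℕ} {r : ℤ} (c : ℤ) (μ : MMap L M m r) (d x) :
    value (c • μ) d x = c • value μ d x := by simp [value, DFinsupp.single_smul]

theorem value_pa {m : ℕ} {r : ℤ} (σ : Equiv.Perm (Fin m)) (μ : MMap L M m r) (d x) :
    value (pa σ μ) d x =
      koszulSign d σ • value μ (fun j => d (σ.symm j)) (fun j => x (σ.symm j)) := by
  rw [value, pa, DFinsupp.single_smul, single_gcast]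
  rfl

end Value

variable [∀ i, AddCommGroup (L i)]

theorem singles_update {m : ℕ} (d : Fin m → ℤ) (x : ∀ j, L (d j)) (j : Fin m) (a : L (d j)) :
    singles d (Function.update x j a) =
      Function.update (singles d x) j (DFinsupp.single (d j) a) := by
  funext i
  rcases eq_or_ne i j with rfl | hij
  · simp [singles]
  · simp [singles, hij]

variable (k : Type) [CommRing k] [∀ i, AddCommGroup (M i)] [∀ i, Module k (L i)]
  [∀ i, Module k (M i)]

open Classical in
/-- The multilinear map of total modules extending a multilinear graded map; it is `0` by
convention when the graded map is not multilinear. -/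
noncomputable def totalMap {m : ℕ} {r : ℤ} (μ : MMap L M m r) :
    MultilinearMap k (fun _ : Fin m => Total L) (Total M) :=
  if h : IsMultilinear k μ then
    MultilinearMap.fromDFinsuppEquiv (fun _ : Fin m => ℤ) k (M := fun _ i => L i) fun d =>
      (DFinsupp.lsingle (r + ∑ j, d j)).compMultilinearMap
        { toFun := μ d
          map_update_add' := fun {i} x j a b => by
            rw [Subsingleton.elim i (instDecidableEqFin m)]; exact (h d x j).1 a b
          map_update_smul' := fun {i} x j c a => by
            rw [Subsingleton.elim i (instDecidableEqFin m)]; exact (h d x j).2 c a }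
  else 0

variable {k}

theorem IsMultilinear.totalMap_singles {m : ℕ} {r : ℤ} {μ : MMap L M m r}
    (h : IsMultilinear k μ) (d : Fin m → ℤ) (x : ∀ j, L (d j)) :
    totalMap k μ (singles d x) = value μ d x := by
  rw [totalMap, dif_pos h]
  exact MultilinearMap.fromDFinsuppEquiv_single _ _ _

theorem isMultilinear_of_value_eq {m : ℕ} {r : ℤ} {μ : MMap L M m r}
    (F : (Fin m → ℤ) → MultilinearMap k (fun _ : Fin m => Total L) (Total M))
    (hF : ∀ d x, value μ d x = F d (singles d x)) : IsMultilinear k μ := by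
  refine fun d x j => ⟨fun a b => ?_, fun c a => ?_⟩ <;>
    apply DFinsupp.single_injective (i := r + ∑ j, d j)
  · rw [DFinsupp.single_add]
    change value _ _ _ = value _ _ _ + value _ _ _
    simp only [hF, singles_update, DFinsupp.single_add, MultilinearMap.map_update_add]
  · rw [DFinsupp.single_smul]
    change value _ _ _ = c • value _ _ _
    simp only [hF, singles_update, DFinsupp.single_smul, MultilinearMap.map_update_smul]

theorem IsMultilinear.int {m : ℕ} {r : ℤ} {μ : MMap L M m r} (h : IsMultilinear k μ) :
    IsMultilinear ℤ μ :=
  fun d x j => ⟨(h d x j).1, fun c a =>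
    (AddMonoidHom.mk' (fun a => μ d (Function.update x j a)) (h d x j).1).map_zsmul c a⟩

namespace IsMultilinear

variable {m : ℕ} {r : ℤ}

theorem add {μ ν : MMap L M m r} (hμ : IsMultilinear k μ) (hν : IsMultilinear k ν) :
    IsMultilinear k (μ + ν) :=
  isMultilinear_of_value_eq (fun _ => totalMap k μ + totalMap k ν) fun d x => by
    simp [hμ.totalMap_singles, hν.totalMap_singles]

theorem sub {μ ν : MMap L M m r} (hμ : IsMultilinear k μ) (hν : IsMultilinear k ν) :
    IsMultilinear k (μ - ν) :=
  isMultilinear_of_value_eq (fun _ => totalMap k μ - totalMap k ν) fun d x => by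
    simp [hμ.totalMap_singles, hν.totalMap_singles]

theorem pa (σ : Equiv.Perm (Fin m)) {μ : MMap L M m r} (hμ : IsMultilinear k μ) :
    IsMultilinear k (pa σ μ) :=
  isMultilinear_of_value_eq (fun d => koszulSign d σ • (totalMap k μ).domDomCongr σ.symm)
    fun d x => by rw [value_pa, ← hμ.totalMap_singles]; rfl

end IsMultilinear
end Total

section Compositions

/-- The sign `(-1) ^ n`. -/
def sgn (n : ℤ) : ℤ := (-1) ^ n.natAbs

theorem sgn_zero : sgn 0 = 1 := rfl

variable {k : Type} [CommRing k] {L M N : ℤ → Type} [∀ i, AddCommGroup (M i)]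
  [∀ i, AddCommGroup (N i)] [∀ i, Module k (M i)]
  [∀ i, Module k (N i)]

theorem value_fc1 {R r s : ℤ} {a : ℕ} {μ : MMap M N 1 r} (hμ : IsMultilinear k μ)
    (g : MMap L M a s) (h : r + s = R) (d x) :
    value (fc1 R μ g h) d x = curry₁ (totalMap k μ) (value g d x) := by
  subst h
  change DFinsupp.single _ (comp₁ μ g d x) = _
  rw [comp₁, single_gcast]
  exact (hμ.totalMap_singles (fun _ => s + ∑ j, d j) fun _ => g d x).symm

theorem value_fc2 {R r s₁ s₂ : ℤ} {a b : ℕ} {μ : MMap M N 2 r} (hμ : IsMultilinear k μ)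
    (g₁ : MMap L M a s₁) (g₂ : MMap L M b s₂) (h : r + (s₁ + s₂) = R) (d x) :
    value (fc2 R μ g₁ g₂ h) d x =
      sgn (s₂ * ∑ j, d (Fin.castAdd b j)) •
        curry₂ (totalMap k μ) (value g₁ _ fun j => x (Fin.castAdd b j))
          (value g₂ _ fun j => x (Fin.natAdd a j)) := by
  subst h
  change DFinsupp.single _ (comp₂ μ g₁ g₂ d x) = _
  rw [comp₂, DFinsupp.single_smul, single_gcast]
  exact congrArg (sgn _ • ·) ((hμ.totalMap_singles _ _).symm.trans (curry₂_apply _ _).symm)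

theorem value_fc3 {R r s₁ s₂ s₃ : ℤ} {a b c : ℕ} {μ : MMap M N 3 r} (hμ : IsMultilinear k μ)
    (g₁ : MMap L M a s₁) (g₂ : MMap L M b s₂) (g₃ : MMap L M c s₃)
    (h : r + (s₁ + s₂ + s₃) = R) (d x) :
    value (fc3 R μ g₁ g₂ g₃ h) d x =
      sgn (s₂ * (∑ j, d (Fin.castAdd c (Fin.castAdd b j)))
          + s₃ * ((∑ j, d (Fin.castAdd c (Fin.castAdd b j)))
            + ∑ j, d (Fin.castAdd c (Fin.natAdd a j)))) •
        curry₃ (totalMap k μ) (value g₁ _ fun j => x (Fin.castAdd c (Fin.castAdd b j)))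
          (value g₂ _ fun j => x (Fin.castAdd c (Fin.natAdd a j)))
          (value g₃ _ fun j => x (Fin.natAdd (a + b) j)) := by
  subst h
  change DFinsupp.single _ (comp₃ μ g₁ g₂ g₃ d x) = _
  rw [comp₃, DFinsupp.single_smul, single_gcast]
  exact congrArg (sgn _ • ·) ((hμ.totalMap_singles _ _).symm.trans (curry₃_apply _ _).symm)

theorem value_fc4 {R r s₁ s₂ s₃ s₄ : ℤ} {a b c e : ℕ} {μ : MMap M N 4 r}
    (hμ : IsMultilinear k μ) (g₁ : MMap L M a s₁) (g₂ : MMap L M b s₂) (g₃ : MMap L M c s₃)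
    (g₄ : MMap L M e s₄) (h : r + (s₁ + s₂ + s₃ + s₄) = R) (d x) :
    value (fc4 R μ g₁ g₂ g₃ g₄ h) d x =
      sgn (s₂ * (∑ j, d (Fin.castAdd e (Fin.castAdd c (Fin.castAdd b j))))
          + s₃ * ((∑ j, d (Fin.castAdd e (Fin.castAdd c (Fin.castAdd b j))))
            + ∑ j, d (Fin.castAdd e (Fin.castAdd c (Fin.natAdd a j))))
          + s₄ * ((∑ j, d (Fin.castAdd e (Fin.castAdd c (Fin.castAdd b j))))
            + (∑ j, d (Fin.castAdd e (Fin.castAdd c (Fin.natAdd a j))))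
            + ∑ j, d (Fin.castAdd e (Fin.natAdd (a + b) j)))) •
        curry₄ (totalMap k μ)
          (value g₁ _ fun j => x (Fin.castAdd e (Fin.castAdd c (Fin.castAdd b j))))
          (value g₂ _ fun j => x (Fin.castAdd e (Fin.castAdd c (Fin.natAdd a j))))
          (value g₃ _ fun j => x (Fin.castAdd e (Fin.natAdd (a + b) j)))
          (value g₄ _ fun j => x (Fin.natAdd (a + b + c) j)) := by
  subst h
  change DFinsupp.single _ (comp₄ μ g₁ g₂ g₃ g₄ d x) = _
  rw [comp₄, DFinsupp.single_smul, single_gcast]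
  exact congrArg (sgn _ • ·) ((hμ.totalMap_singles _ _).symm.trans (curry₄_apply _ _).symm)

variable [∀ i, AddCommGroup (L i)] [∀ i, Module k (L i)]

theorem value_pc {R r s : ℤ} (m₁ m₂ : ℕ) {n : ℕ} {μ : MMap L M (m₁ + 1 + m₂) r}
    (hμ : IsMultilinear k μ) (ν : MMap L L n s) (h : r + s = R) (d x) :
    value (pc R m₁ m₂ μ ν h) d x =
      sgn (s * ∑ j, d (Fin.castAdd m₂ (Fin.castAdd n j))) •
        totalMap k μ
          (Fin.append
            (Fin.append (fun j => singles d x (Fin.castAdd m₂ (Fin.castAdd n j)))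
              fun _ => value ν _ fun j => x (Fin.castAdd m₂ (Fin.natAdd m₁ j)))
            fun j => singles d x (Fin.natAdd (m₁ + n) j)) := by
  subst h
  change DFinsupp.single _ (pcomp m₁ m₂ μ ν d x) = _
  rw [pcomp, DFinsupp.single_smul, single_gcast]
  refine congrArg (sgn _ • ·) ((hμ.totalMap_singles _ _).symm.trans
    (congrArg (totalMap k μ) (funext fun t => ?_)))
  refine Fin.addCases (Fin.addCases (fun t => ?_) fun t => ?_) (fun t => ?_) t <;>
    simp [singles, single_gcast, value]

theorem value_pc_zero_zero {R r s : ℤ} {n : ℕ} {μ : MMap L M 1 r} (hμ : IsMultilinear k μ)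
    (ν : MMap L L n s) (h : r + s = R) (d x) :
    value (pc R 0 0 μ ν h) d x =
      curry₁ (totalMap k μ) (value ν _ fun j => x (Fin.natAdd 0 j)) := by
  rw [value_pc 0 0 hμ, ← curry₁_apply, Fin.sum_univ_zero, mul_zero, sgn_zero, one_smul]
  rfl

theorem value_pc_zero_one {R r s : ℤ} {n : ℕ} {μ : MMap L M 2 r} (hμ : IsMultilinear k μ)
    (ν : MMap L L n s) (h : r + s = R) (d x) :
    value (pc R 0 1 μ ν h) d x =
      curry₂ (totalMap k μ) (value ν _ fun j => x (Fin.castAdd 1 (Fin.natAdd 0 j)))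
        (singles d x (Fin.natAdd (0 + n) 0)) := by
  rw [value_pc 0 1 hμ, ← curry₂_apply, Fin.sum_univ_zero, mul_zero, sgn_zero, one_smul]
  rfl

theorem value_pc_one_zero {R r s : ℤ} {n : ℕ} {μ : MMap L M 2 r} (hμ : IsMultilinear k μ)
    (ν : MMap L L n s) (h : r + s = R) (d x) :
    value (pc R 1 0 μ ν h) d x =
      sgn (s * d (Fin.castAdd n 0)) • curry₂ (totalMap k μ) (singles d x (Fin.castAdd n 0))
        (value ν _ fun j => x (Fin.natAdd 1 j)) := by
  rw [value_pc 1 0 hμ, ← curry₂_apply, Fin.sum_univ_one]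
  rfl

theorem value_pc_zero_two {R r s : ℤ} {n : ℕ} {μ : MMap L M 3 r} (hμ : IsMultilinear k μ)
    (ν : MMap L L n s) (h : r + s = R) (d x) :
    value (pc R 0 2 μ ν h) d x =
      curry₃ (totalMap k μ) (value ν _ fun j => x (Fin.castAdd 2 (Fin.natAdd 0 j)))
        (singles d x (Fin.natAdd (0 + n) 0)) (singles d x (Fin.natAdd (0 + n) 1)) := by
  rw [value_pc 0 2 hμ, ← curry₃_apply, Fin.sum_univ_zero, mul_zero, sgn_zero, one_smul]
  rfl

theorem value_pc_one_one {R r s : ℤ} {n : ℕ} {μ : MMap L M 3 r} (hμ : IsMultilinear k μ)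
    (ν : MMap L L n s) (h : r + s = R) (d x) :
    value (pc R 1 1 μ ν h) d x =
      sgn (s * d (Fin.castAdd 1 (Fin.castAdd n 0))) •
        curry₃ (totalMap k μ) (singles d x (Fin.castAdd 1 (Fin.castAdd n 0)))
          (value ν _ fun j => x (Fin.castAdd 1 (Fin.natAdd 1 j)))
          (singles d x (Fin.natAdd (1 + n) 0)) := by
  rw [value_pc 1 1 hμ, ← curry₃_apply, Fin.sum_univ_one]
  rfl

theorem value_pc_two_zero {R r s : ℤ} {n : ℕ} {μ : MMap L M 3 r} (hμ : IsMultilinear k μ)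
    (ν : MMap L L n s) (h : r + s = R) (d x) :
    value (pc R 2 0 μ ν h) d x =
      sgn (s * (d (Fin.castAdd n 0) + d (Fin.castAdd n 1))) •
        curry₃ (totalMap k μ) (singles d x (Fin.castAdd n 0)) (singles d x (Fin.castAdd n 1))
          (value ν _ fun j => x (Fin.natAdd 2 j)) := by
  rw [value_pc 2 0 hμ, ← curry₃_apply, Fin.sum_univ_two]
  rfl

end Compositions

section Closure

variable {k : Type} [CommRing k] {L M N : ℤ → Type} [∀ i, AddCommGroup (L i)]
  [∀ i, AddCommGroup (M i)] [∀ i, AddCommGroup (N i)] [∀ i, Module k (L i)]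
  [∀ i, Module k (M i)] [∀ i, Module k (N i)]

namespace IsMultilinear

theorem fc1 {R r s : ℤ} {a : ℕ} {μ : MMap M N 1 r} {g : MMap L M a s} (hμ : IsMultilinear k μ)
    (hg : IsMultilinear k g) (h : r + s = R) : IsMultilinear k (fc1 R μ g h) :=
  isMultilinear_of_value_eq
    (fun _ => (curry₁ (totalMap k μ)).compMultilinearMap (totalMap k g)) fun d x => by
      rw [value_fc1 hμ, ← hg.totalMap_singles]
      rfl

theorem fc2 {R r s₁ s₂ : ℤ} {a b : ℕ} {μ : MMap M N 2 r} {g₁ : MMap L M a s₁}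
    {g₂ : MMap L M b s₂} (hμ : IsMultilinear k μ) (h₁ : IsMultilinear k g₁)
    (h₂ : IsMultilinear k g₂) (h : r + (s₁ + s₂) = R) :
    IsMultilinear k (fc2 R μ g₁ g₂ h) :=
  isMultilinear_of_value_eq
    (fun d => sgn (s₂ * ∑ j, d (Fin.castAdd b j)) •
      blockApply ((curry₂ (totalMap k μ)).compMultilinearMap (totalMap k g₁)) (totalMap k g₂))
    fun d x => by
      rw [value_fc2 hμ, ← h₁.totalMap_singles, ← h₂.totalMap_singles]
      rfl

theorem fc3 {R r s₁ s₂ s₃ : ℤ} {a b c : ℕ} {μ : MMap M N 3 r} {g₁ : MMap L M a s₁}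
    {g₂ : MMap L M b s₂} {g₃ : MMap L M c s₃} (hμ : IsMultilinear k μ)
    (h₁ : IsMultilinear k g₁) (h₂ : IsMultilinear k g₂) (h₃ : IsMultilinear k g₃)
    (h : r + (s₁ + s₂ + s₃) = R) : IsMultilinear k (fc3 R μ g₁ g₂ g₃ h) :=
  isMultilinear_of_value_eq
    (fun d => sgn _ •
      blockApply (blockApply ((curry₃ (totalMap k μ)).compMultilinearMap (totalMap k g₁))
        (totalMap k g₂)) (totalMap k g₃))
    fun d x => by
      rw [value_fc3 hμ, ← h₁.totalMap_singles, ← h₂.totalMap_singles, ← h₃.totalMap_singles]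
      rfl

theorem fc4 {R r s₁ s₂ s₃ s₄ : ℤ} {a b c e : ℕ} {μ : MMap M N 4 r} {g₁ : MMap L M a s₁}
    {g₂ : MMap L M b s₂} {g₃ : MMap L M c s₃} {g₄ : MMap L M e s₄} (hμ : IsMultilinear k μ)
    (h₁ : IsMultilinear k g₁) (h₂ : IsMultilinear k g₂) (h₃ : IsMultilinear k g₃)
    (h₄ : IsMultilinear k g₄) (h : r + (s₁ + s₂ + s₃ + s₄) = R) :
    IsMultilinear k (fc4 R μ g₁ g₂ g₃ g₄ h) :=
  isMultilinear_of_value_eq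
    (fun d => sgn _ •
      blockApply (blockApply (blockApply
        ((curry₄ (totalMap k μ)).compMultilinearMap (totalMap k g₁))
        (totalMap k g₂)) (totalMap k g₃)) (totalMap k g₄))
    fun d x => by
      rw [value_fc4 hμ, ← h₁.totalMap_singles, ← h₂.totalMap_singles, ← h₃.totalMap_singles,
        ← h₄.totalMap_singles]
      rfl

theorem pc {R r s : ℤ} {m₁ m₂ n : ℕ} {μ : MMap L M (m₁ + 1 + m₂) r} {ν : MMap L L n s}
    (hμ : IsMultilinear k μ) (hν : IsMultilinear k ν) (h : r + s = R) :
    IsMultilinear k (pc R m₁ m₂ μ ν h) :=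
  isMultilinear_of_value_eq
    (fun d => sgn (s * ∑ j, d (Fin.castAdd m₂ (Fin.castAdd n j))) •
      blockInsert (totalMap k μ) (totalMap k ν))
    fun d x => by
      rw [value_pc m₁ m₂ hμ, ← hν.totalMap_singles, smul_apply, blockInsert_apply]
      rfl

end IsMultilinear

end Closure

section Differential

variable {L M : ℤ → Type} [∀ i, AddCommGroup (L i)] [∀ i, AddCommGroup (M i)] {R r : ℤ}
  (D' : MMap M M 1 (-1)) (D : MMap L L 1 (-1))

theorem bd_one (μ : MMap L M 1 r) (h : -1 + r = R) :
    bd R D' D μ h = fc1 R D' μ h - sgn r • pc R 0 0 μ D (by omega) := by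
  subst h
  change bdry D' D μ = _
  rw [bdry, Fin.sum_univ_one]
  rfl

theorem bd_two (μ : MMap L M 2 r) (h : -1 + r = R) :
    bd R D' D μ h =
      fc1 R D' μ h - sgn r • (pc R 0 1 μ D (by omega) + pc R 1 0 μ D (by omega)) := by
  subst h
  change bdry D' D μ = _
  rw [bdry, Fin.sum_univ_two]
  rfl

theorem bd_three (μ : MMap L M 3 r) (h : -1 + r = R) :
    bd R D' D μ h = fc1 R D' μ h -
      sgn r • (pc R 0 2 μ D (by omega) + pc R 1 1 μ D (by omega) + pc R 2 0 μ D (by omega)) := by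
  subst h
  change bdry D' D μ = _
  rw [bdry, Fin.sum_univ_three]
  rfl

end Differential

section Signs

theorem sgn_one : sgn 1 = -1 := rfl

theorem sgn_two : sgn 2 = 1 := rfl

theorem sgn_neg (n : ℤ) : sgn (-n) = sgn n := by rw [sgn, Int.natAbs_neg, sgn]

theorem sgn_add (m n : ℤ) : sgn (m + n) = sgn m * sgn n := by
  simp only [sgn, neg_one_pow_eq_ite, Int.natAbs_even, Int.even_add]
  by_cases hm : Even m <;> by_cases hn : Even n <;> simp [hm, hn]

theorem sgn_eq_one_or (n : ℤ) : sgn n = 1 ∨ sgn n = -1 := neg_one_pow_eq_or ℤ _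

theorem koszulSign_zero {m : ℕ} (σ : Equiv.Perm (Fin m)) : koszulSign (fun _ => 0) σ = 1 := by
  simp [koszulSign]

theorem koszulSign_P12_two (d : Fin 2 → ℤ) : koszulSign d (P12 2) = sgn (d 0 * d 1) := by
  have : (univ.filter fun p : Fin 2 × Fin 2 => p.1 < p.2 ∧ P12 2 p.2 < P12 2 p.1) = {(0, 1)} := by
    decide
  rw [koszulSign, this, prod_singleton, sgn]

theorem koszulSign_P12_three (d : Fin 3 → ℤ) : koszulSign d (P12 3) = sgn (d 0 * d 1) := by
  have : (univ.filter fun p : Fin 3 × Fin 3 => p.1 < p.2 ∧ P12 3 p.2 < P12 3 p.1) = {(0, 1)} := by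
    decide
  rw [koszulSign, this, prod_singleton, sgn]

end Signs

-- The equations only involve sums and signs, so they are evaluated over `ℤ` whatever the ring `k`.
local notation:max μ:max "⟪" a "⟫" => curry₁ (totalMap ℤ μ) a
local notation:max μ:max "⟪" a "," b "⟫" => curry₂ (totalMap ℤ μ) a b
local notation:max μ:max "⟪" a "," b "," c "⟫" => curry₃ (totalMap ℤ μ) a b c
local notation:max μ:max "⟪" a "," b "," c "," e "⟫" => curry₄ (totalMap ℤ μ) a b c e

section HomogeneousElements

variable {L M : ℤ → Type} [∀ i, AddCommGroup (L i)] [∀ i, AddCommGroup (M i)]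

theorem value_one {r : ℤ} {μ : MMap L M 1 r} (hμ : IsMultilinear ℤ μ) (d x) :
    value μ d x = μ⟪singles d x 0⟫ :=
  (hμ.totalMap_singles d x).symm.trans (curry₁_apply _ _).symm

theorem value_two {r : ℤ} {μ : MMap L M 2 r} (hμ : IsMultilinear ℤ μ) (d x) :
    value μ d x = μ⟪singles d x 0, singles d x 1⟫ :=
  (hμ.totalMap_singles d x).symm.trans (curry₂_apply _ _).symm

theorem value_three {r : ℤ} {μ : MMap L M 3 r} (hμ : IsMultilinear ℤ μ) (d x) :
    value μ d x = μ⟪singles d x 0, singles d x 1, singles d x 2⟫ :=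
  (hμ.totalMap_singles d x).symm.trans (curry₃_apply _ _).symm

theorem value_four {r : ℤ} {μ : MMap L M 4 r} (hμ : IsMultilinear ℤ μ) (d x) :
    value μ d x = μ⟪singles d x 0, singles d x 1, singles d x 2, singles d x 3⟫ :=
  (hμ.totalMap_singles d x).symm.trans (curry₄_apply _ _).symm

/-- `v` is an element of the summand of degree `i` of the total module. The element `0` has every
degree. -/
def HasDegree (i : ℤ) (v : Total L) : Prop := ∃ x : L i, v = DFinsupp.single i x

theorem hasDegree_singles {m : ℕ} (d : Fin m → ℤ) (x : ∀ j, L (d j)) (j) :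
    HasDegree (d j) (singles d x j) := ⟨x j, rfl⟩

theorem forall_singles_one (P : ℤ → Total L → Prop) :
    (∀ (d : Fin 1 → ℤ) x, P (d 0) (singles d x 0)) ↔ ∀ i a, HasDegree i a → P i a := by
  refine ⟨?_, fun h d x => h _ _ (hasDegree_singles d x 0)⟩
  rintro h i _ ⟨x, rfl⟩
  exact h ![i] (Fin.cons x finZeroElim)

theorem forall_singles_two (P : ℤ → ℤ → Total L → Total L → Prop) :
    (∀ (d : Fin 2 → ℤ) x, P (d 0) (d 1) (singles d x 0) (singles d x 1)) ↔
      ∀ i j a b, HasDegree i a → HasDegree j b → P i j a b := by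
  refine ⟨?_, fun h d x => h _ _ _ _ (hasDegree_singles d x 0) (hasDegree_singles d x 1)⟩
  rintro h i j _ _ ⟨x, rfl⟩ ⟨y, rfl⟩
  exact h ![i, j] (Fin.cons x (Fin.cons y finZeroElim))

theorem forall_singles_three (P : ℤ → ℤ → ℤ → Total L → Total L → Total L → Prop) :
    (∀ (d : Fin 3 → ℤ) x,
      P (d 0) (d 1) (d 2) (singles d x 0) (singles d x 1) (singles d x 2)) ↔
      ∀ i j l a b c, HasDegree i a → HasDegree j b → HasDegree l c → P i j l a b c := by
  refine ⟨?_, fun h d x => h _ _ _ _ _ _ (hasDegree_singles d x 0) (hasDegree_singles d x 1)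
    (hasDegree_singles d x 2)⟩
  rintro h i j l _ _ _ ⟨x, rfl⟩ ⟨y, rfl⟩ ⟨z, rfl⟩
  exact h ![i, j, l] (Fin.cons x (Fin.cons y (Fin.cons z finZeroElim)))

theorem forall_degree_zero_two (P : Total L → Total L → Prop) :
    (∀ x : Fin 2 → L 0, P (singles (fun _ => 0) x 0) (singles (fun _ => 0) x 1)) ↔
      ∀ a b, HasDegree 0 a → HasDegree 0 b → P a b := by
  refine ⟨?_, fun h x => h _ _ ⟨x 0, rfl⟩ ⟨x 1, rfl⟩⟩
  rintro h _ _ ⟨x, rfl⟩ ⟨y, rfl⟩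
  exact h ![x, y]

theorem forall_degree_zero_three (P : Total L → Total L → Total L → Prop) :
    (∀ x : Fin 3 → L 0,
      P (singles (fun _ => 0) x 0) (singles (fun _ => 0) x 1) (singles (fun _ => 0) x 2)) ↔
      ∀ a b c, HasDegree 0 a → HasDegree 0 b → HasDegree 0 c → P a b c := by
  refine ⟨?_, fun h x => h _ _ _ ⟨x 0, rfl⟩ ⟨x 1, rfl⟩ ⟨x 2, rfl⟩⟩
  rintro h _ _ _ ⟨x, rfl⟩ ⟨y, rfl⟩ ⟨z, rfl⟩
  exact h ![x, y, z]

theorem forall_degree_zero_four (P : Total L → Total L → Total L → Total L → Prop) :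
    (∀ x : Fin 4 → L 0,
      P (singles (fun _ => 0) x 0) (singles (fun _ => 0) x 1) (singles (fun _ => 0) x 2)
        (singles (fun _ => 0) x 3)) ↔
      ∀ a b c e, HasDegree 0 a → HasDegree 0 b → HasDegree 0 c → HasDegree 0 e → P a b c e := by
  refine ⟨?_, fun h x => h _ _ _ _ ⟨x 0, rfl⟩ ⟨x 1, rfl⟩ ⟨x 2, rfl⟩ ⟨x 3, rfl⟩⟩
  rintro h _ _ _ _ ⟨x, rfl⟩ ⟨y, rfl⟩ ⟨z, rfl⟩ ⟨w, rfl⟩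
  exact h ![x, y, z, w]

theorem ext_hasDegree {W : Type} [AddCommGroup W] {f g : Total L →ₗ[ℤ] W}
    (h : ∀ i a, HasDegree i a → f a = g a) : f = g :=
  DFinsupp.lhom_ext fun i x => h i _ ⟨x, rfl⟩

theorem ext_hasDegree₂ {W : Type} [AddCommGroup W] {f g : Total L →ₗ[ℤ] Total L →ₗ[ℤ] W}
    (h : ∀ i j a b, HasDegree i a → HasDegree j b → f a b = g a b) : f = g :=
  ext_hasDegree fun i a ha => ext_hasDegree fun j b hb => h i j a b ha hb

theorem hasDegree_totalMap {m : ℕ} {r : ℤ} (μ : MMap L M m r) {d : Fin m → ℤ}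
    {v : Fin m → Total L} (hv : ∀ j, HasDegree (d j) (v j)) :
    HasDegree (r + ∑ j, d j) (totalMap ℤ μ v) := by
  by_cases hμ : IsMultilinear ℤ μ
  · choose x hx using hv
    exact ⟨μ d x, by rw [show v = singles d x from funext hx, hμ.totalMap_singles, value]⟩
  · exact ⟨0, by simp [totalMap, hμ]⟩

namespace HasDegree

theorem map {r i s : ℤ} (μ : MMap L M 1 r) {a : Total L} (ha : HasDegree i a)
    (h : r + i = s := by lia) : HasDegree s μ⟪a⟫ := by
  subst h
  have := hasDegree_totalMap μ (d := ![i]) (v := ![a]) (Fin.forall_fin_one.2 ha)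
  rw [Fin.sum_univ_one, ← curry₁_apply] at this
  exact this

theorem map₂ {r i j s : ℤ} (μ : MMap L M 2 r) {a b : Total L} (ha : HasDegree i a)
    (hb : HasDegree j b) (h : r + (i + j) = s := by lia) : HasDegree s μ⟪a, b⟫ := by
  subst h
  have := hasDegree_totalMap μ (d := ![i, j]) (v := ![a, b]) (Fin.forall_fin_two.2 ⟨ha, hb⟩)
  rw [Fin.sum_univ_two, ← curry₂_apply] at this
  exact this

theorem map₃ {r i j l s : ℤ} (μ : MMap L M 3 r) {a b c : Total L} (ha : HasDegree i a)
    (hb : HasDegree j b) (hc : HasDegree l c) (h : r + (i + j + l) = s := by lia) :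
    HasDegree s μ⟪a, b, c⟫ := by
  subst h
  have := hasDegree_totalMap μ (d := ![i, j, l]) (v := ![a, b, c]) fun t => by
    fin_cases t
    exacts [ha, hb, hc]
  rw [Fin.sum_univ_three, ← curry₃_apply] at this
  exact this

end HasDegree

end HomogeneousElements

section DegreeTwo

/-- `L` is concentrated in degrees `0`, `1` and `2`. -/
def IsThreeTerm (L : ℤ → Type) [∀ i, Zero (L i)] : Prop :=
  ∀ i : ℤ, (i < 0 ∨ 2 < i) → ∀ x : L i, x = 0

variable {L M : ℤ → Type} [∀ i, AddCommGroup (L i)] [∀ i, AddCommGroup (M i)]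

theorem IsThreeTerm.eq_zero_of_hasDegree (hL : IsThreeTerm L) {i : ℤ} {v : Total L}
    (hv : HasDegree i v) (hi : i < 0 ∨ 2 < i := by lia) : v = 0 := by
  obtain ⟨x, rfl⟩ := hv
  rw [hL i hi x, DFinsupp.single_zero]

theorem eq_iff_of_degree_two (hL : IsThreeTerm L) (hM : IsThreeTerm M) {m : ℕ}
    {μ ν : MMap L M m 2} (hμ : IsMultilinear ℤ μ) (hν : IsMultilinear ℤ ν) :
    μ = ν ↔ ∀ x : Fin m → L 0, value μ (fun _ => 0) x = value ν (fun _ => 0) x := by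
  refine ⟨fun h x => by rw [h], fun h => value_ext.2 fun d x => ?_⟩
  by_cases hd : ∃ j, d j < 0
  · obtain ⟨j, hj⟩ := hd
    have hx : singles d x j = 0 := hL.eq_zero_of_hasDegree (hasDegree_singles d x j) (.inl hj)
    rw [← hμ.totalMap_singles, ← hν.totalMap_singles, MultilinearMap.map_coord_zero _ j hx,
      MultilinearMap.map_coord_zero _ j hx]
  push Not at hd
  rcases eq_or_ne d fun _ => 0 with rfl | hne
  · exact h x
  · obtain ⟨j, hj⟩ := Function.ne_iff.1 hne
    have hpos : 0 < ∑ j, d j :=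
      sum_pos' (fun j _ => hd j) ⟨j, mem_univ j, (hd j).lt_of_ne hj.symm⟩
    have vanish (ρ : MMap L M m 2) : value ρ d x = 0 :=
      hM.eq_zero_of_hasDegree ⟨ρ d x, rfl⟩ (.inr (by lia))
    rw [vanish, vanish]

end DegreeTwo

section Equations

/-- The differential and the structure maps of a weak Lie 3-algebra, without the identities
(L1)–(L4) and (W1)–(W11) and without `d ∘ d = 0`. -/
structure Operations (L : ℤ → Type) [∀ i, AddCommGroup (L i)] where
  D : MMap L L 1 (-1)
  l2 : MMap L L 2 0
  l3 : MMap L L 3 1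
  l4 : MMap L L 4 2
  l21 : MMap L L 2 1
  l211 : MMap L L 2 2
  l31 : MMap L L 3 2
  l32 : MMap L L 3 2
  isThreeTerm : IsThreeTerm L
  linD : IsMultilinear ℤ D
  lin2 : IsMultilinear ℤ l2
  lin3 : IsMultilinear ℤ l3
  lin4 : IsMultilinear ℤ l4
  lin21 : IsMultilinear ℤ l21
  lin211 : IsMultilinear ℤ l211
  lin31 : IsMultilinear ℤ l31
  lin32 : IsMultilinear ℤ l32

/-- The operations underlying a weak Lie 3-algebra. -/
def WeakLie3.toOperations {k : Type} [CommRing k] {L : ℤ → Type} [∀ i, AddCommGroup (L i)]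
    [∀ i, Module k (L i)] (A : WeakLie3 k L) : Operations L :=
  { A with
    isThreeTerm := A.bound
    linD := A.linD.int
    lin2 := A.leib.lin2.int
    lin3 := A.leib.lin3.int
    lin4 := A.leib.lin4.int
    lin21 := A.lin21.int
    lin211 := A.lin211.int
    lin31 := A.lin31.int
    lin32 := A.lin32.int }

variable {L M : ℤ → Type} [∀ i, AddCommGroup (L i)] [∀ i, AddCommGroup (M i)]
  (A : Operations L) (B : Operations M)
  (f1 : MMap L M 1 0) (f2 : MMap L M 2 1) (f21 : MMap L M 2 2) (f3 : MMap L M 3 2)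

/-- Equation (M1) on elements. -/
def EqM1 : Prop := ∀ a, B.D⟪f1⟪a⟫⟫ = f1⟪A.D⟪a⟫⟫

/-- Equation (M2) on homogeneous elements. -/
def EqM2 : Prop :=
  ∀ i j a b, HasDegree i a → HasDegree j b →
    B.D⟪f2⟪a, b⟫⟫ + (f2⟪A.D⟪a⟫, b⟫ + sgn i • f2⟪a, A.D⟪b⟫⟫) =
      f1⟪A.l2⟪a, b⟫⟫ - B.l2⟪f1⟪a⟫, f1⟪b⟫⟫

/-- Equation (M3) on homogeneous elements. -/
def EqM3 : Prop :=
  ∀ i j l a b c, HasDegree i a → HasDegree j b → HasDegree l c →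
    B.D⟪f3⟪a, b, c⟫⟫ - (f3⟪A.D⟪a⟫, b, c⟫ + sgn i • f3⟪a, A.D⟪b⟫, c⟫
        + sgn (i + j) • f3⟪a, b, A.D⟪c⟫⟫) =
      f1⟪A.l3⟪a, b, c⟫⟫ - f2⟪a, A.l2⟪b, c⟫⟫ + f2⟪A.l2⟪a, b⟫, c⟫
        + sgn (i * j) • f2⟪b, A.l2⟪a, c⟫⟫ - B.l3⟪f1⟪a⟫, f1⟪b⟫, f1⟪c⟫⟫
        - sgn i • B.l2⟪f1⟪a⟫, f2⟪b, c⟫⟫ + B.l2⟪f2⟪a, b⟫, f1⟪c⟫⟫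
        + sgn (i * j) • sgn j • B.l2⟪f1⟪b⟫, f2⟪a, c⟫⟫

/-- Equation (M4) on elements of degree 0. -/
def EqM4 : Prop :=
  ∀ a b c e, HasDegree 0 a → HasDegree 0 b → HasDegree 0 c → HasDegree 0 e →
    f1⟪A.l4⟪a, b, c, e⟫⟫ - B.l4⟪f1⟪a⟫, f1⟪b⟫, f1⟪c⟫, f1⟪e⟫⟫ =
      f2⟪A.l3⟪a, b, c⟫, e⟫ + f2⟪a, A.l3⟪b, c, e⟫⟫ - f2⟪b, A.l3⟪a, c, e⟫⟫ + f2⟪c, A.l3⟪a, b, e⟫⟫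
        - f3⟪A.l2⟪a, b⟫, c, e⟫ + f3⟪a, A.l2⟪b, c⟫, e⟫ - f3⟪b, A.l2⟪a, c⟫, e⟫
        - f3⟪a, b, A.l2⟪c, e⟫⟫ + f3⟪a, c, A.l2⟪b, e⟫⟫ - f3⟪b, c, A.l2⟪a, e⟫⟫
        + B.l2⟪f3⟪a, b, c⟫, f1⟪e⟫⟫ + B.l2⟪f1⟪a⟫, f3⟪b, c, e⟫⟫
        - B.l2⟪f1⟪b⟫, f3⟪a, c, e⟫⟫ + B.l2⟪f1⟪c⟫, f3⟪a, b, e⟫⟫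
        - B.l2⟪f2⟪a, b⟫, f2⟪c, e⟫⟫ + B.l2⟪f2⟪a, c⟫, f2⟪b, e⟫⟫ - B.l2⟪f2⟪b, c⟫, f2⟪a, e⟫⟫
        + B.l3⟪f2⟪a, b⟫, f1⟪c⟫, f1⟪e⟫⟫ - B.l3⟪f1⟪a⟫, f2⟪b, c⟫, f1⟪e⟫⟫
        + B.l3⟪f1⟪b⟫, f2⟪a, c⟫, f1⟪e⟫⟫ + B.l3⟪f1⟪a⟫, f1⟪b⟫, f2⟪c, e⟫⟫
        - B.l3⟪f1⟪a⟫, f1⟪c⟫, f2⟪b, e⟫⟫ + B.l3⟪f1⟪b⟫, f1⟪c⟫, f2⟪a, e⟫⟫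

/-- Equation (M5) on homogeneous elements. -/
def EqM5 : Prop :=
  ∀ i j a b, HasDegree i a → HasDegree j b →
    B.D⟪f21⟪a, b⟫⟫ - (f21⟪A.D⟪a⟫, b⟫ + sgn i • f21⟪a, A.D⟪b⟫⟫) =
      -f2⟪a, b⟫ - sgn (i * j) • f2⟪b, a⟫ + f1⟪A.l21⟪a, b⟫⟫ - B.l21⟪f1⟪a⟫, f1⟪b⟫⟫

/-- Equation (M6) on elements of degree 0. -/
def EqM6 : Prop :=
  ∀ a b, HasDegree 0 a → HasDegree 0 b →
    f1⟪A.l211⟪a, b⟫⟫ - B.l211⟪f1⟪a⟫, f1⟪b⟫⟫ = f21⟪a, b⟫ - f21⟪b, a⟫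

/-- Equation (M7) on elements of degree 0. -/
def EqM7 : Prop :=
  ∀ a b c, HasDegree 0 a → HasDegree 0 b → HasDegree 0 c →
    f1⟪A.l31⟪a, b, c⟫⟫ - B.l31⟪f1⟪a⟫, f1⟪b⟫, f1⟪c⟫⟫ =
      f3⟪a, b, c⟫ + f3⟪b, a, c⟫ + f2⟪A.l21⟪a, b⟫, c⟫ + B.l2⟪f21⟪a, b⟫, f1⟪c⟫⟫

/-- Equation (M8) on elements of degree 0. -/
def EqM8 : Prop :=
  ∀ a b c, HasDegree 0 a → HasDegree 0 b → HasDegree 0 c →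
    f1⟪A.l32⟪a, b, c⟫⟫ - B.l32⟪f1⟪a⟫, f1⟪b⟫, f1⟪c⟫⟫ =
      f3⟪a, b, c⟫ + f3⟪a, c, b⟫ - f2⟪a, A.l21⟪b, c⟫⟫ + f21⟪A.l2⟪a, b⟫, c⟫
        + f21⟪b, A.l2⟪a, c⟫⟫ - B.l2⟪f1⟪a⟫, f21⟪b, c⟫⟫ - B.l21⟪f2⟪a, b⟫, f1⟪c⟫⟫
        - B.l21⟪f1⟪b⟫, f2⟪a, c⟫⟫

variable {f1 f2 f21 f3}

theorem eqM1_iff (h1 : IsMultilinear ℤ f1) :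
    bd (-1) B.D A.D f1 = 0 ↔ EqM1 A B f1 := by
  have key : bd (-1) B.D A.D f1 = 0 ↔
      ∀ i a, HasDegree i a → B.D⟪f1⟪a⟫⟫ = f1⟪A.D⟪a⟫⟫ := by
    rw [value_ext, ← forall_singles_one fun _ a => B.D⟪f1⟪a⟫⟫ = f1⟪A.D⟪a⟫⟫]
    refine forall₂_congr fun d x => ?_
    rw [bd_one, value_sub, value_zsmul, value_fc1 B.linD, value_pc_zero_zero h1, value_one h1,
      value_one A.linD, value_zero, sgn_zero, one_smul, sub_eq_zero]
    rfl
  refine key.trans ⟨fun h a => ?_, fun h _ a _ => h a⟩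
  exact LinearMap.congr_fun (f := curry₁ (totalMap ℤ B.D) ∘ₗ curry₁ (totalMap ℤ f1))
    (g := curry₁ (totalMap ℤ f1) ∘ₗ curry₁ (totalMap ℤ A.D)) (ext_hasDegree h) a

theorem eqM2_iff (h1 : IsMultilinear ℤ f1) (h2 : IsMultilinear ℤ f2) :
    bd 0 B.D A.D f2 = fc1 0 f1 A.l2 - fc2 0 B.l2 f1 f1 ↔ EqM2 A B f1 f2 := by
  rw [value_ext, EqM2, ← forall_singles_two fun i j a b => _ = _]
  refine forall₂_congr fun d x => ?_
  rw [bd_two]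
  simp only [value_sub, value_add, value_fc1 B.linD, value_fc1 h1,
    value_fc2 B.lin2, value_pc_zero_one h2, value_pc_one_zero h2, value_one A.linD,
    value_one h1, value_two h2, value_two A.lin2, sgn_one, zero_mul, sgn_zero, neg_one_mul,
    sgn_neg, one_smul, neg_smul, sub_neg_eq_add]
  rfl

theorem eqM3_iff (h1 : IsMultilinear ℤ f1) (h2 : IsMultilinear ℤ f2) (h3 : IsMultilinear ℤ f3) :
    bd 1 B.D A.D f3 = fc1 1 f1 A.l3 - pc 1 1 0 f2 A.l2 + pc 1 0 1 f2 A.l2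
        + pa (P12 3) (pc 1 1 0 f2 A.l2) - fc3 1 B.l3 f1 f1 f1 - fc2 1 B.l2 f1 f2
        + fc2 1 B.l2 f2 f1 + pa (P12 3) (fc2 1 B.l2 f1 f2) ↔ EqM3 A B f1 f2 f3 := by
  rw [value_ext, EqM3, ← forall_singles_three fun i j l a b c => _ = _]
  refine forall₂_congr fun d x => ?_
  rw [bd_three]
  simp only [value_sub, value_add, value_pa, value_fc1 B.linD, value_fc1 h1,
    value_fc2 B.lin2, value_fc3 B.lin3, value_pc_zero_one h2, value_pc_one_zero h2,
    value_pc_zero_two h3, value_pc_one_one h3, value_pc_two_zero h3, value_one A.linD,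
    value_one h1, value_two h2, value_two A.lin2, value_three A.lin3, value_three h3,
    koszulSign_P12_three, Fin.sum_univ_one, sgn_two, sgn_zero, neg_one_mul, sgn_neg, zero_mul,
    one_mul, add_zero, one_smul]
  rfl

theorem eqM5_iff (h1 : IsMultilinear ℤ f1) (h2 : IsMultilinear ℤ f2)
    (h21 : IsMultilinear ℤ f21) :
    bd 1 B.D A.D f21 = - f2 - pa (P12 2) f2 + fc1 1 f1 A.l21 - fc2 1 B.l21 f1 f1 ↔
      EqM5 A B f1 f2 f21 := by
  rw [value_ext, EqM5, ← forall_singles_two fun i j a b => _ = _]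
  refine forall₂_congr fun d x => ?_
  rw [bd_two]
  simp only [value_sub, value_add, value_neg, value_pa, value_fc1 B.linD,
    value_fc1 h1, value_fc2 B.lin21, value_pc_zero_one h21, value_pc_one_zero h21,
    value_one A.linD, value_one h1, value_two h2, value_two h21, value_two A.lin21,
    koszulSign_P12_two, sgn_two, sgn_zero, neg_one_mul, sgn_neg, zero_mul, one_smul]
  rfl

theorem eqM6_iff (h1 : IsMultilinear ℤ f1) (h21 : IsMultilinear ℤ f21) :
    fc1 2 f1 A.l211 - fc2 2 B.l211 f1 f1 = f21 - pa (P12 2) f21 ↔ EqM6 A B f1 f21 := by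
  rw [eq_iff_of_degree_two A.isThreeTerm B.isThreeTerm
    ((h1.fc1 A.lin211 _).sub (B.lin211.fc2 h1 h1 _)) (h21.sub (h21.pa _)),
    EqM6, ← forall_degree_zero_two fun a b => _ = _]
  refine forall_congr' fun x => ?_
  simp only [value_sub, value_pa, value_fc1 h1, value_fc2 B.lin211, value_one h1, value_two h21,
    value_two A.lin211, koszulSign_zero, zero_mul, sgn_zero, one_smul]
  rfl

theorem eqM7_iff (h1 : IsMultilinear ℤ f1) (h2 : IsMultilinear ℤ f2)
    (h21 : IsMultilinear ℤ f21) (h3 : IsMultilinear ℤ f3) :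
    fc1 2 f1 A.l31 - fc3 2 B.l31 f1 f1 f1 =
        f3 + pa (P12 3) f3 + pc 2 0 1 f2 A.l21 + fc2 2 B.l2 f21 f1 ↔
      EqM7 A B f1 f2 f21 f3 := by
  rw [eq_iff_of_degree_two A.isThreeTerm B.isThreeTerm
    ((h1.fc1 A.lin31 _).sub (B.lin31.fc3 h1 h1 h1 _)) (by apply_rules [IsMultilinear.add,
      IsMultilinear.pa, IsMultilinear.pc, IsMultilinear.fc2, A.lin21, B.lin2]),
    EqM7, ← forall_degree_zero_three fun a b c => _ = _]
  refine forall_congr' fun x => ?_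
  simp only [value_sub, value_add, value_pa, value_fc1 h1, value_fc2 B.lin2, value_fc3 B.lin31,
    value_pc_zero_one h2, value_one h1, value_two A.lin21, value_two h21, value_three h3,
    value_three A.lin31, koszulSign_zero, zero_mul, add_zero, sgn_zero, one_smul]
  rfl

theorem eqM8_iff (h1 : IsMultilinear ℤ f1) (h2 : IsMultilinear ℤ f2)
    (h21 : IsMultilinear ℤ f21) (h3 : IsMultilinear ℤ f3) :
    fc1 2 f1 A.l32 - fc3 2 B.l32 f1 f1 f1 =
        f3 + pa (P23 3) f3 - pc 2 1 0 f2 A.l21 + pc 2 0 1 f21 A.l2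
        + pa (P12 3) (pc 2 1 0 f21 A.l2) - fc2 2 B.l2 f1 f21 - fc2 2 B.l21 f2 f1
        - pa (P12 3) (fc2 2 B.l21 f1 f2) ↔
      EqM8 A B f1 f2 f21 f3 := by
  rw [eq_iff_of_degree_two A.isThreeTerm B.isThreeTerm
    ((h1.fc1 A.lin32 _).sub (B.lin32.fc3 h1 h1 h1 _))
    (by apply_rules [IsMultilinear.add, IsMultilinear.sub, IsMultilinear.pa, IsMultilinear.pc,
      IsMultilinear.fc2, A.lin2, A.lin21, B.lin2, B.lin21]),
    EqM8, ← forall_degree_zero_three fun a b c => _ = _]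
  refine forall_congr' fun x => ?_
  simp only [value_sub, value_add, value_pa, value_fc1 h1, value_fc2 B.lin2, value_fc2 B.lin21,
    value_fc3 B.lin32, value_pc_zero_one h21, value_pc_one_zero h2, value_pc_one_zero h21,
    value_one h1, value_two A.lin2, value_two A.lin21, value_two h2, value_two h21,
    value_three h3, value_three A.lin32, koszulSign_zero, Fin.sum_univ_one, mul_zero, zero_mul,
    add_zero, sgn_zero, one_smul]
  rfl

theorem eqM4_iff (h1 : IsMultilinear ℤ f1) (h2 : IsMultilinear ℤ f2)
    (h3 : IsMultilinear ℤ f3) :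
    fc1 2 f1 A.l4 - fc4 2 B.l4 f1 f1 f1 f1 =
        pc 2 0 1 f2 A.l3 + pc 2 1 0 f2 A.l3 - pa (P12 4) (pc 2 1 0 f2 A.l3)
        + pa (P123 4) (pc 2 1 0 f2 A.l3) - pc 2 0 2 f3 A.l2 + pc 2 1 1 f3 A.l2
        - pa (P12 4) (pc 2 1 1 f3 A.l2) - pc 2 2 0 f3 A.l2 + pa (P23 4) (pc 2 2 0 f3 A.l2)
        - pa (P132 4) (pc 2 2 0 f3 A.l2) + fc2 2 B.l2 f3 f1 + fc2 2 B.l2 f1 f3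
        - pa (P12 4) (fc2 2 B.l2 f1 f3) + pa (P123 4) (fc2 2 B.l2 f1 f3)
        - fc2 2 B.l2 f2 f2 + pa (P23 4) (fc2 2 B.l2 f2 f2) - pa (P132 4) (fc2 2 B.l2 f2 f2)
        + fc3 2 B.l3 f2 f1 f1 - fc3 2 B.l3 f1 f2 f1 + pa (P12 4) (fc3 2 B.l3 f1 f2 f1)
        + fc3 2 B.l3 f1 f1 f2 - pa (P23 4) (fc3 2 B.l3 f1 f1 f2)
        + pa (P132 4) (fc3 2 B.l3 f1 f1 f2) ↔
      EqM4 A B f1 f2 f3 := by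
  rw [eq_iff_of_degree_two A.isThreeTerm B.isThreeTerm
    ((h1.fc1 A.lin4 _).sub (B.lin4.fc4 h1 h1 h1 h1 _))
    (by repeat' apply_rules [IsMultilinear.add, IsMultilinear.sub, IsMultilinear.pa,
      IsMultilinear.pc, IsMultilinear.fc2, IsMultilinear.fc3, A.lin2, A.lin3, B.lin2, B.lin3]),
    EqM4, ← forall_degree_zero_four fun a b c e => _ = _]
  refine forall_congr' fun x => ?_
  simp only [value_sub, value_add, value_pa, value_fc1 h1, value_fc2 B.lin2, value_fc3 B.lin3,
    value_fc4 B.lin4, value_pc_zero_one h2, value_pc_one_zero h2, value_pc_zero_two h3,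
    value_pc_one_one h3, value_pc_two_zero h3, value_one h1, value_two A.lin2, value_two h2,
    value_three A.lin3, value_three h3, value_four A.lin4, koszulSign_zero, sum_const_zero,
    mul_zero, add_zero, sgn_zero, one_smul]
  rfl

end Equations

section WeakMaps

/-- Multilinear maps satisfying (M1)–(M8) with respect to operations that need not satisfy the
identities of a weak Lie 3-algebra. -/
structure IsWeakMap (k : Type) [CommRing k] {L M : ℤ → Type} [∀ i, AddCommGroup (L i)]
    [∀ i, AddCommGroup (M i)] [∀ i, Module k (L i)] [∀ i, Module k (M i)] (A : Operations L)
    (B : Operations M) (f1 : MMap L M 1 0) (f2 : MMap L M 2 1) (f21 : MMap L M 2 2)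
    (f3 : MMap L M 3 2) : Prop where
  lin1 : IsMultilinear k f1
  lin2 : IsMultilinear k f2
  lin21 : IsMultilinear k f21
  lin3 : IsMultilinear k f3
  m1 : EqM1 A B f1
  m2 : EqM2 A B f1 f2
  m3 : EqM3 A B f1 f2 f3
  m4 : EqM4 A B f1 f2 f3
  m5 : EqM5 A B f1 f2 f21
  m6 : EqM6 A B f1 f21
  m7 : EqM7 A B f1 f2 f21 f3
  m8 : EqM8 A B f1 f2 f21 f3

theorem isWeakMorphism_iff {k : Type} [CommRing k] {L M : ℤ → Type} [∀ i, AddCommGroup (L i)]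
    [∀ i, AddCommGroup (M i)] [∀ i, Module k (L i)] [∀ i, Module k (M i)] (A : WeakLie3 k L)
    (B : WeakLie3 k M) {f1 : MMap L M 1 0} {f2 : MMap L M 2 1} {f21 : MMap L M 2 2}
    {f3 : MMap L M 3 2} :
    IsWeakMorphism k A B f1 f2 f21 f3 ↔
      IsWeakMap k A.toOperations B.toOperations f1 f2 f21 f3 where
  mp hf :=
    have l1 := hf.lin1.int
    have l2 := hf.lin2.int
    have l21 := hf.lin21.int
    have l3 := hf.lin3.int
    { hf with
      m1 := (eqM1_iff A.toOperations B.toOperations l1).1 hf.m1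
      m2 := (eqM2_iff A.toOperations B.toOperations l1 l2).1 hf.m2
      m3 := (eqM3_iff A.toOperations B.toOperations l1 l2 l3).1 hf.m3
      m4 := (eqM4_iff A.toOperations B.toOperations l1 l2 l3).1 hf.m4
      m5 := (eqM5_iff A.toOperations B.toOperations l1 l2 l21).1 hf.m5
      m6 := (eqM6_iff A.toOperations B.toOperations l1 l21).1 hf.m6
      m7 := (eqM7_iff A.toOperations B.toOperations l1 l2 l21 l3).1 hf.m7
      m8 := (eqM8_iff A.toOperations B.toOperations l1 l2 l21 l3).1 hf.m8 }
  mpr hf :=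
    have l1 := hf.lin1.int
    have l2 := hf.lin2.int
    have l21 := hf.lin21.int
    have l3 := hf.lin3.int
    { hf with
      m1 := (eqM1_iff A.toOperations B.toOperations l1).2 hf.m1
      m2 := (eqM2_iff A.toOperations B.toOperations l1 l2).2 hf.m2
      m3 := (eqM3_iff A.toOperations B.toOperations l1 l2 l3).2 hf.m3
      m4 := (eqM4_iff A.toOperations B.toOperations l1 l2 l3).2 hf.m4
      m5 := (eqM5_iff A.toOperations B.toOperations l1 l2 l21).2 hf.m5
      m6 := (eqM6_iff A.toOperations B.toOperations l1 l21).2 hf.m6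
      m7 := (eqM7_iff A.toOperations B.toOperations l1 l2 l21 l3).2 hf.m7
      m8 := (eqM8_iff A.toOperations B.toOperations l1 l2 l21 l3).2 hf.m8 }

end WeakMaps

section Composite

variable {k : Type} [CommRing k] {L M N : ℤ → Type} [∀ i, AddCommGroup (L i)]
  [∀ i, AddCommGroup (M i)] [∀ i, AddCommGroup (N i)] [∀ i, Module k (L i)]
  [∀ i, Module k (M i)] [∀ i, Module k (N i)]
  {f1 : MMap L M 1 0} {f2 : MMap L M 2 1} {f21 : MMap L M 2 2} {f3 : MMap L M 3 2}
  {f1' : MMap M N 1 0} {f2' : MMap M N 2 1} {f21' : MMap M N 2 2} {f3' : MMap M N 3 2}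

theorem isMultilinear_cmp1 (h1' : IsMultilinear k f1') (h1 : IsMultilinear k f1) :
    IsMultilinear k (cmp1 f1' f1) :=
  h1'.fc1 h1 _

theorem isMultilinear_cmp2 (h1' : IsMultilinear k f1') (h2' : IsMultilinear k f2')
    (h1 : IsMultilinear k f1) (h2 : IsMultilinear k f2) :
    IsMultilinear k (cmp2 f1' f2' f1 f2) :=
  (h2'.fc2 h1 h1 _).add (h1'.fc1 h2 _)

theorem isMultilinear_cmp21 (h1' : IsMultilinear k f1') (h21' : IsMultilinear k f21')
    (h1 : IsMultilinear k f1) (h21 : IsMultilinear k f21) :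
    IsMultilinear k (cmp21 f1' f21' f1 f21) :=
  (h21'.fc2 h1 h1 _).add (h1'.fc1 h21 _)

theorem isMultilinear_cmp3 (h1' : IsMultilinear k f1') (h2' : IsMultilinear k f2')
    (h3' : IsMultilinear k f3') (h1 : IsMultilinear k f1) (h2 : IsMultilinear k f2)
    (h3 : IsMultilinear k f3) : IsMultilinear k (cmp3 f1' f2' f3' f1 f2 f3) :=
  (((h3'.fc3 h1 h1 h1 _).sub (h2'.fc2 h2 h1 _)).add (h2'.fc2 h1 h2 _)).sub
    ((h2'.fc2 h1 h2 _).pa _) |>.add (h1'.fc1 h3 _)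

theorem cmp1_apply (h1' : IsMultilinear k f1') (h1 : IsMultilinear k f1) (a) :
    (cmp1 f1' f1)⟪a⟫ = f1'⟪f1⟪a⟫⟫ := by
  refine LinearMap.congr_fun (g := curry₁ (totalMap ℤ f1') ∘ₗ curry₁ (totalMap ℤ f1))
    (ext_hasDegree ((forall_singles_one fun i a => _ = _).1 fun d x => ?_)) a
  rw [← value_one (isMultilinear_cmp1 h1' h1).int, cmp1, value_fc1 h1'.int, value_one h1.int]
  rfl

theorem cmp2_apply (h1' : IsMultilinear k f1') (h2' : IsMultilinear k f2')
    (h1 : IsMultilinear k f1) (h2 : IsMultilinear k f2) (a b) :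
    (cmp2 f1' f2' f1 f2)⟪a, b⟫ = f2'⟪f1⟪a⟫, f1⟪b⟫⟫ + f1'⟪f2⟪a, b⟫⟫ := by
  refine LinearMap.congr_fun₂ (g := (curry₂ (totalMap ℤ f2')).compl₁₂ (curry₁ (totalMap ℤ f1))
      (curry₁ (totalMap ℤ f1)) + (curry₂ (totalMap ℤ f2)).compr₂ (curry₁ (totalMap ℤ f1')))
    (ext_hasDegree₂ ((forall_singles_two fun i j a b => _ = _).1 fun d x => ?_)) a b
  rw [← value_two (isMultilinear_cmp2 h1' h2' h1 h2).int, cmp2, value_add, value_fc2 h2'.int,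
    value_fc1 h1'.int, value_one h1.int, value_one h1.int, value_two h2.int, zero_mul, sgn_zero,
    one_smul]
  rfl

theorem cmp21_apply (h1' : IsMultilinear k f1') (h21' : IsMultilinear k f21')
    (h1 : IsMultilinear k f1) (h21 : IsMultilinear k f21) (a b) :
    (cmp21 f1' f21' f1 f21)⟪a, b⟫ = f21'⟪f1⟪a⟫, f1⟪b⟫⟫ + f1'⟪f21⟪a, b⟫⟫ := by
  refine LinearMap.congr_fun₂ (g := (curry₂ (totalMap ℤ f21')).compl₁₂ (curry₁ (totalMap ℤ f1))
      (curry₁ (totalMap ℤ f1)) + (curry₂ (totalMap ℤ f21)).compr₂ (curry₁ (totalMap ℤ f1')))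
    (ext_hasDegree₂ ((forall_singles_two fun i j a b => _ = _).1 fun d x => ?_)) a b
  rw [← value_two (isMultilinear_cmp21 h1' h21' h1 h21).int, cmp21, value_add, value_fc2 h21'.int,
    value_fc1 h1'.int, value_one h1.int, value_one h1.int, value_two h21.int, zero_mul, sgn_zero,
    one_smul]
  rfl

theorem cmp3_apply (h1' : IsMultilinear k f1') (h2' : IsMultilinear k f2')
    (h3' : IsMultilinear k f3') (h1 : IsMultilinear k f1) (h2 : IsMultilinear k f2)
    (h3 : IsMultilinear k f3) {i j l : ℤ} {a b c : Total L} (ha : HasDegree i a)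
    (hb : HasDegree j b) (hc : HasDegree l c) :
    (cmp3 f1' f2' f3' f1 f2 f3)⟪a, b, c⟫ =
      f3'⟪f1⟪a⟫, f1⟪b⟫, f1⟪c⟫⟫ - f2'⟪f2⟪a, b⟫, f1⟪c⟫⟫ + sgn i • f2'⟪f1⟪a⟫, f2⟪b, c⟫⟫
        - sgn (i * j) • sgn j • f2'⟪f1⟪b⟫, f2⟪a, c⟫⟫ + f1'⟪f3⟪a, b, c⟫⟫ := by
  revert i j l a b c
  rw [← forall_singles_three fun i j l a b c => _ = _]
  intro d x
  rw [← value_three (isMultilinear_cmp3 h1' h2' h3' h1 h2 h3).int, cmp3]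
  simp only [value_add, value_sub, value_pa, value_fc1 h1'.int, value_fc2 h2'.int,
    value_fc3 h3'.int, value_one h1.int, value_two h2.int, value_three h3.int,
    koszulSign_P12_three, Fin.sum_univ_one, zero_mul, one_mul, add_zero, sgn_zero, one_smul]
  rfl

end Composite

section DegreeZero

theorem Operations.D_eq_zero {L : ℤ → Type} [∀ i, AddCommGroup (L i)] (A : Operations L)
    {a : Total L} (ha : HasDegree 0 a) : A.D⟪a⟫ = 0 :=
  A.isThreeTerm.eq_zero_of_hasDegree (ha.map A.D rfl)

variable {k : Type} [CommRing k] {L M : ℤ → Type} [∀ i, AddCommGroup (L i)]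
  [∀ i, AddCommGroup (M i)] [∀ i, Module k (L i)] [∀ i, Module k (M i)]
  {A : Operations L} {B : Operations M}
  {f1 : MMap L M 1 0} {f2 : MMap L M 2 1} {f21 : MMap L M 2 2} {f3 : MMap L M 3 2}

namespace IsWeakMap

theorem m2_degree_zero (hf : IsWeakMap k A B f1 f2 f21 f3) {a b : Total L}
    (ha : HasDegree 0 a) (hb : HasDegree 0 b) :
    B.D⟪f2⟪a, b⟫⟫ = f1⟪A.l2⟪a, b⟫⟫ - B.l2⟪f1⟪a⟫, f1⟪b⟫⟫ := by
  simpa only [A.D_eq_zero ha, A.D_eq_zero hb, map_zero, LinearMap.zero_apply, smul_zero,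
    add_zero] using hf.m2 0 0 a b ha hb

theorem m3_degree_zero (hf : IsWeakMap k A B f1 f2 f21 f3) {a b c : Total L}
    (ha : HasDegree 0 a) (hb : HasDegree 0 b) (hc : HasDegree 0 c) :
    B.D⟪f3⟪a, b, c⟫⟫ =
      f1⟪A.l3⟪a, b, c⟫⟫ - f2⟪a, A.l2⟪b, c⟫⟫ + f2⟪A.l2⟪a, b⟫, c⟫ + f2⟪b, A.l2⟪a, c⟫⟫
        - B.l3⟪f1⟪a⟫, f1⟪b⟫, f1⟪c⟫⟫ - B.l2⟪f1⟪a⟫, f2⟪b, c⟫⟫ + B.l2⟪f2⟪a, b⟫, f1⟪c⟫⟫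
        + B.l2⟪f1⟪b⟫, f2⟪a, c⟫⟫ := by
  simpa only [A.D_eq_zero ha, A.D_eq_zero hb, A.D_eq_zero hc, map_zero, LinearMap.zero_apply,
    smul_zero, add_zero, sub_zero, mul_zero, sgn_zero, one_smul] using hf.m3 0 0 0 a b c ha hb hc

theorem m2_degree_two (hf : IsWeakMap k A B f1 f2 f21 f3) {i j : ℤ} {a b : Total L}
    (ha : HasDegree i a) (hb : HasDegree j b) (hij : i + j = 2 := by rfl) :
    f2⟪A.D⟪a⟫, b⟫ + sgn i • f2⟪a, A.D⟪b⟫⟫ = f1⟪A.l2⟪a, b⟫⟫ - B.l2⟪f1⟪a⟫, f1⟪b⟫⟫ := by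
  have hf2 : f2⟪a, b⟫ = 0 := B.isThreeTerm.eq_zero_of_hasDegree (ha.map₂ f2 hb rfl)
  rw [← hf.m2 i j a b ha hb, hf2, map_zero, zero_add]

theorem m3_degree_one (hf : IsWeakMap k A B f1 f2 f21 f3) {i j l : ℤ} {a b c : Total L}
    (ha : HasDegree i a) (hb : HasDegree j b) (hc : HasDegree l c)
    (hijl : i + j + l = 1 := by rfl) :
    -(f3⟪A.D⟪a⟫, b, c⟫ + sgn i • f3⟪a, A.D⟪b⟫, c⟫ + sgn (i + j) • f3⟪a, b, A.D⟪c⟫⟫) =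
      f1⟪A.l3⟪a, b, c⟫⟫ - f2⟪a, A.l2⟪b, c⟫⟫ + f2⟪A.l2⟪a, b⟫, c⟫
        + sgn (i * j) • f2⟪b, A.l2⟪a, c⟫⟫ - B.l3⟪f1⟪a⟫, f1⟪b⟫, f1⟪c⟫⟫
        - sgn i • B.l2⟪f1⟪a⟫, f2⟪b, c⟫⟫ + B.l2⟪f2⟪a, b⟫, f1⟪c⟫⟫
        + sgn (i * j) • sgn j • B.l2⟪f1⟪b⟫, f2⟪a, c⟫⟫ := by
  have hf3 : f3⟪a, b, c⟫ = 0 := B.isThreeTerm.eq_zero_of_hasDegree (ha.map₃ f3 hb hc rfl)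
  rw [← hf.m3 i j l a b c ha hb hc, hf3, map_zero, zero_sub]

end IsWeakMap

end DegreeZero

section CompositeEquations

variable {k : Type} [CommRing k] {L M N : ℤ → Type} [∀ i, AddCommGroup (L i)]
  [∀ i, AddCommGroup (M i)] [∀ i, AddCommGroup (N i)] [∀ i, Module k (L i)]
  [∀ i, Module k (M i)] [∀ i, Module k (N i)]
  {A : Operations L} {B : Operations M} {C : Operations N}
  {f1 : MMap L M 1 0} {f2 : MMap L M 2 1} {f21 : MMap L M 2 2} {f3 : MMap L M 3 2}
  {f1' : MMap M N 1 0} {f2' : MMap M N 2 1} {f21' : MMap M N 2 2} {f3' : MMap M N 3 2}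

namespace IsWeakMap

theorem cmp_m1 (hf : IsWeakMap k A B f1 f2 f21 f3) (hf' : IsWeakMap k B C f1' f2' f21' f3') :
    EqM1 A C (cmp1 f1' f1) := fun a => by
  rw [cmp1_apply hf'.lin1 hf.lin1, cmp1_apply hf'.lin1 hf.lin1, hf'.m1, hf.m1]

theorem cmp_m2 (hf : IsWeakMap k A B f1 f2 f21 f3) (hf' : IsWeakMap k B C f1' f2' f21' f3') :
    EqM2 A C (cmp1 f1' f1) (cmp2 f1' f2' f1 f2) := fun i j a b ha hb => by
  linear_combination (norm := skip) congrArg (curry₁ (totalMap ℤ f1')) (hf.m2 i j a b ha hb)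
    + hf'.m2 i j _ _ (ha.map f1) (hb.map f1)
  simp only [cmp1_apply hf'.lin1 hf.lin1, cmp2_apply hf'.lin1 hf'.lin2 hf.lin1 hf.lin2, hf.m1 _,
    hf'.m1 _, map_add, map_sub, map_zsmul, smul_add]
  abel

theorem cmp_m5 (hf : IsWeakMap k A B f1 f2 f21 f3) (hf' : IsWeakMap k B C f1' f2' f21' f3') :
    EqM5 A C (cmp1 f1' f1) (cmp2 f1' f2' f1 f2) (cmp21 f1' f21' f1 f21) :=
  fun i j a b ha hb => by
    linear_combination (norm := skip) congrArg (curry₁ (totalMap ℤ f1')) (hf.m5 i j a b ha hb)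
      + hf'.m5 i j _ _ (ha.map f1) (hb.map f1)
    simp only [cmp1_apply hf'.lin1 hf.lin1, cmp2_apply hf'.lin1 hf'.lin2 hf.lin1 hf.lin2,
      cmp21_apply hf'.lin1 hf'.lin21 hf.lin1 hf.lin21, hf.m1 _, hf'.m1 _, map_add, map_sub,
      map_neg, map_zsmul, smul_add]
    abel

theorem cmp_m6 (hf : IsWeakMap k A B f1 f2 f21 f3) (hf' : IsWeakMap k B C f1' f2' f21' f3') :
    EqM6 A C (cmp1 f1' f1) (cmp21 f1' f21' f1 f21) := fun a b ha hb => by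
  linear_combination (norm := skip) congrArg (curry₁ (totalMap ℤ f1')) (hf.m6 a b ha hb)
    + hf'.m6 _ _ (ha.map f1) (hb.map f1)
  simp only [cmp1_apply hf'.lin1 hf.lin1, cmp21_apply hf'.lin1 hf'.lin21 hf.lin1 hf.lin21, map_sub]
  abel

theorem cmp_m3 (hf : IsWeakMap k A B f1 f2 f21 f3) (hf' : IsWeakMap k B C f1' f2' f21' f3') :
    EqM3 A C (cmp1 f1' f1) (cmp2 f1' f2' f1 f2) (cmp3 f1' f2' f3' f1 f2 f3) :=
  fun i j l a b c ha hb hc => by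
    have ha' : HasDegree i f1⟪a⟫ := ha.map f1
    have hb' : HasDegree j f1⟪b⟫ := hb.map f1
    have hc' : HasDegree l f1⟪c⟫ := hc.map f1
    have cmp3 {i j l : ℤ} {a b c : Total L} (ha : HasDegree i a) (hb : HasDegree j b)
        (hc : HasDegree l c) :=
      cmp3_apply hf'.lin1 hf'.lin2 hf'.lin3 hf.lin1 hf.lin2 hf.lin3 ha hb hc
    linear_combination (norm := skip)
      congrArg (curry₁ (totalMap ℤ f1')) (hf.m3 i j l a b c ha hb hc)
      + hf'.m3 i j l _ _ _ ha' hb' hc'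
      - hf'.m2 _ _ _ _ (ha.map₂ f2 hb rfl) hc'
      + sgn i • hf'.m2 _ _ _ _ ha' (hb.map₂ f2 hc rfl)
      - sgn (i * j) • sgn j • hf'.m2 _ _ _ _ hb' (ha.map₂ f2 hc rfl)
      + congrArg (f2'⟪·, f1⟪c⟫⟫) (hf.m2 i j a b ha hb)
      - congrArg (f2'⟪f1⟪a⟫, ·⟫) (hf.m2 j l b c hb hc)
      + sgn (i * j) • congrArg (f2'⟪f1⟪b⟫, ·⟫) (hf.m2 i l a c ha hc)
    simp only [cmp1_apply hf'.lin1 hf.lin1, cmp2_apply hf'.lin1 hf'.lin2 hf.lin1 hf.lin2,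
      cmp3 ha hb hc, cmp3 (ha.map A.D rfl) hb hc, cmp3 ha (hb.map A.D rfl) hc,
      cmp3 ha hb (hc.map A.D rfl), hf.m1 _, hf'.m1 _, map_add, map_sub, map_zsmul, smul_add,
      smul_sub, LinearMap.add_apply, LinearMap.sub_apply, LinearMap.smul_apply, mul_add, add_mul,
      sgn_add, sgn_neg, sgn_one, mul_neg, neg_mul, mul_one, one_mul]
    rcases sgn_eq_one_or i with hi | hi <;> rcases sgn_eq_one_or j with hj | hj <;>
    rcases sgn_eq_one_or (i * j) with hij | hij <;> simp only [hi, hj, hij] <;> abel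

theorem cmp_m7 (hf : IsWeakMap k A B f1 f2 f21 f3) (hf' : IsWeakMap k B C f1' f2' f21' f3') :
    EqM7 A C (cmp1 f1' f1) (cmp2 f1' f2' f1 f2) (cmp21 f1' f21' f1 f21)
      (cmp3 f1' f2' f3' f1 f2 f3) := fun a b c ha hb hc => by
  have hc' : HasDegree 0 f1⟪c⟫ := hc.map f1
  have hab : HasDegree 2 f21⟪a, b⟫ := ha.map₂ f21 hb
  have cmp3 {a b c : Total L} (ha : HasDegree 0 a) (hb : HasDegree 0 b) (hc : HasDegree 0 c) :=
    cmp3_apply hf'.lin1 hf'.lin2 hf'.lin3 hf.lin1 hf.lin2 hf.lin3 ha hb hc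
  linear_combination (norm := skip) congrArg (curry₁ (totalMap ℤ f1')) (hf.m7 a b c ha hb hc)
    + hf'.m7 _ _ _ (ha.map f1) (hb.map f1) hc' - hf'.m2_degree_two hab hc'
    + congrArg (f2'⟪·, f1⟪c⟫⟫) (hf.m5 0 0 a b ha hb)
  simp only [cmp1_apply hf'.lin1 hf.lin1, cmp2_apply hf'.lin1 hf'.lin2 hf.lin1 hf.lin2,
    cmp21_apply hf'.lin1 hf'.lin21 hf.lin1 hf.lin21, cmp3 ha hb hc, cmp3 hb ha hc,
    A.D_eq_zero ha, A.D_eq_zero hb, B.D_eq_zero hc', map_add, map_sub, map_neg, map_zero,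
    LinearMap.add_apply, LinearMap.sub_apply, LinearMap.neg_apply, LinearMap.zero_apply,
    mul_zero, add_zero, sgn_zero, smul_zero, one_smul]
  abel

theorem cmp_m8 (hf : IsWeakMap k A B f1 f2 f21 f3) (hf' : IsWeakMap k B C f1' f2' f21' f3') :
    EqM8 A C (cmp1 f1' f1) (cmp2 f1' f2' f1 f2) (cmp21 f1' f21' f1 f21)
      (cmp3 f1' f2' f3' f1 f2 f3) := fun a b c ha hb hc => by
  have ha' : HasDegree 0 f1⟪a⟫ := ha.map f1
  have hb' : HasDegree 0 f1⟪b⟫ := hb.map f1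
  have hc' : HasDegree 0 f1⟪c⟫ := hc.map f1
  have hab : HasDegree 1 f2⟪a, b⟫ := ha.map₂ f2 hb
  have hac : HasDegree 1 f2⟪a, c⟫ := ha.map₂ f2 hc
  have hbc : HasDegree 2 f21⟪b, c⟫ := hb.map₂ f21 hc
  have f21'_ab : f21'⟪f2⟪a, b⟫, f1⟪c⟫⟫ = 0 :=
    C.isThreeTerm.eq_zero_of_hasDegree (hab.map₂ f21' hc' rfl)
  have f21'_ac : f21'⟪f1⟪b⟫, f2⟪a, c⟫⟫ = 0 :=
    C.isThreeTerm.eq_zero_of_hasDegree (hb'.map₂ f21' hac rfl)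
  have cmp3 {a b c : Total L} (ha : HasDegree 0 a) (hb : HasDegree 0 b) (hc : HasDegree 0 c) :=
    cmp3_apply hf'.lin1 hf'.lin2 hf'.lin3 hf.lin1 hf.lin2 hf.lin3 ha hb hc
  linear_combination (norm := skip) congrArg (curry₁ (totalMap ℤ f1')) (hf.m8 a b c ha hb hc)
    + hf'.m8 _ _ _ ha' hb' hc' + hf'.m2_degree_two ha' hbc
    - congrArg (f2'⟪f1⟪a⟫, ·⟫) (hf.m5 0 0 b c hb hc)
    + congrArg (f21'⟪·, f1⟪c⟫⟫) (hf.m2_degree_zero ha hb)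
    + congrArg (f21'⟪f1⟪b⟫, ·⟫) (hf.m2_degree_zero ha hc)
    + hf'.m5 _ _ _ _ hab hc' + hf'.m5 _ _ _ _ hb' hac
  simp only [cmp1_apply hf'.lin1 hf.lin1, cmp2_apply hf'.lin1 hf'.lin2 hf.lin1 hf.lin2,
    cmp21_apply hf'.lin1 hf'.lin21 hf.lin1 hf.lin21, cmp3 ha hb hc, cmp3 ha hc hb,
    f21'_ab, f21'_ac, A.D_eq_zero hb, A.D_eq_zero hc, B.D_eq_zero ha', B.D_eq_zero hb',
    B.D_eq_zero hc', map_add, map_sub, map_neg, map_zero, LinearMap.add_apply,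
    LinearMap.sub_apply, LinearMap.zero_apply, mul_zero, zero_mul, add_zero, zero_add, sgn_zero,
    smul_zero, one_smul]
  abel

theorem cmp_m4 (hf : IsWeakMap k A B f1 f2 f21 f3) (hf' : IsWeakMap k B C f1' f2' f21' f3') :
    EqM4 A C (cmp1 f1' f1) (cmp2 f1' f2' f1 f2) (cmp3 f1' f2' f3' f1 f2 f3) :=
  fun a b c e ha hb hc he => by
    have ha' : HasDegree 0 f1⟪a⟫ := ha.map f1
    have hb' : HasDegree 0 f1⟪b⟫ := hb.map f1
    have hc' : HasDegree 0 f1⟪c⟫ := hc.map f1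
    have he' : HasDegree 0 f1⟪e⟫ := he.map f1
    have al2 {x y : Total L} (hx : HasDegree 0 x) (hy : HasDegree 0 y) :
      HasDegree 0 A.l2⟪x, y⟫ := hx.map₂ A.l2 hy
    have df2 {x y : Total L} (hx : HasDegree 0 x) (hy : HasDegree 0 y) :
      HasDegree 1 f2⟪x, y⟫ := hx.map₂ f2 hy
    have df3 {x y z : Total L} (hx : HasDegree 0 x) (hy : HasDegree 0 y) (hz : HasDegree 0 z) :
      HasDegree 2 f3⟪x, y, z⟫ := hx.map₃ f3 hy hz
    have cmp3 {x y z : Total L} (hx : HasDegree 0 x) (hy : HasDegree 0 y) (hz : HasDegree 0 z) :=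
      cmp3_apply hf'.lin1 hf'.lin2 hf'.lin3 hf.lin1 hf.lin2 hf.lin3 hx hy hz
    linear_combination (norm := skip)
      congrArg (curry₁ (totalMap ℤ f1')) (hf.m4 a b c e ha hb hc he)
      + hf'.m4 _ _ _ _ ha' hb' hc' he'
      - hf'.m2_degree_two (df3 ha hb hc) he' - hf'.m2_degree_two ha' (df3 hb hc he)
      + hf'.m2_degree_two hb' (df3 ha hc he) - hf'.m2_degree_two hc' (df3 ha hb he)
      + hf'.m2_degree_two (df2 ha hb) (df2 hc he) - hf'.m2_degree_two (df2 ha hc) (df2 hb he)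
      + hf'.m2_degree_two (df2 hb hc) (df2 ha he)
      - hf'.m3_degree_one (df2 ha hb) hc' he' + hf'.m3_degree_one ha' (df2 hb hc) he'
      - hf'.m3_degree_one hb' (df2 ha hc) he' - hf'.m3_degree_one ha' hb' (df2 hc he)
      + hf'.m3_degree_one ha' hc' (df2 hb he) - hf'.m3_degree_one hb' hc' (df2 ha he)
    simp only [cmp1_apply hf'.lin1 hf.lin1, cmp2_apply hf'.lin1 hf'.lin2 hf.lin1 hf.lin2,
      cmp3 (al2 ha hb) hc he, cmp3 ha (al2 hb hc) he, cmp3 hb (al2 ha hc) he,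
      cmp3 ha hb (al2 hc he), cmp3 ha hc (al2 hb he), cmp3 hb hc (al2 ha he), cmp3 ha hb hc,
      cmp3 hb hc he, cmp3 ha hc he, cmp3 ha hb he, hf.m3_degree_zero ha hb hc,
      hf.m3_degree_zero hb hc he, hf.m3_degree_zero ha hc he, hf.m3_degree_zero ha hb he,
      hf.m2_degree_zero ha hb, hf.m2_degree_zero ha hc, hf.m2_degree_zero ha he,
      hf.m2_degree_zero hb hc, hf.m2_degree_zero hb he, hf.m2_degree_zero hc he,
      B.D_eq_zero ha', B.D_eq_zero hb', B.D_eq_zero hc', B.D_eq_zero he', map_add, map_sub,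
      map_zero, LinearMap.add_apply, LinearMap.sub_apply, LinearMap.zero_apply, mul_zero,
      zero_mul, add_zero, zero_add, sgn_zero, sgn_one, smul_zero, neg_smul, one_smul]
    abel

end IsWeakMap

theorem composition_of_weak_morphisms_general (hf : IsWeakMap k A B f1 f2 f21 f3)
    (hf' : IsWeakMap k B C f1' f2' f21' f3') :
    IsWeakMap k A C (cmp1 f1' f1) (cmp2 f1' f2' f1 f2) (cmp21 f1' f21' f1 f21)
      (cmp3 f1' f2' f3' f1 f2 f3) where
  lin1 := isMultilinear_cmp1 hf'.lin1 hf.lin1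
  lin2 := isMultilinear_cmp2 hf'.lin1 hf'.lin2 hf.lin1 hf.lin2
  lin21 := isMultilinear_cmp21 hf'.lin1 hf'.lin21 hf.lin1 hf.lin21
  lin3 := isMultilinear_cmp3 hf'.lin1 hf'.lin2 hf'.lin3 hf.lin1 hf.lin2 hf.lin3
  m1 := hf.cmp_m1 hf'
  m2 := hf.cmp_m2 hf'
  m3 := hf.cmp_m3 hf'
  m4 := hf.cmp_m4 hf'
  m5 := hf.cmp_m5 hf'
  m6 := hf.cmp_m6 hf'
  m7 := hf.cmp_m7 hf'
  m8 := hf.cmp_m8 hf'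

end CompositeEquations

end WL3

namespace WL3

/-- **Composition of weak morphisms is a weak morphism**: for weak morphisms
`f : (L,d,λ) → (L',d',λ')` and `f' : (L',d',λ') → (L'',d'',λ'')` of weak Lie 3-algebras,
the composite with components `(f'∘f)1 = f1'∘f1`, `(f'∘f)2 = f2'∘(f1,f1) + f1'∘f2`,
`(f'∘f)21 = f21'∘(f1,f1) + f1'∘f21` and
`(f'∘f)3 = f3'∘(f1,f1,f1) - f2'∘(f2,f1) + f2'∘(f1,f2) - f2'∘(f1,f2)^{(12)} + f1'∘f3`
satisfies equations (M1)–(M8), i.e. is a weak morphism `(L,d,λ) → (L'',d'',λ'')`. -/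
theorem composition_of_weak_morphisms
    (k : Type) [CommRing k]
    {L M N : ℤ → Type} [∀ i, AddCommGroup (L i)] [∀ i, Module k (L i)]
    [∀ i, AddCommGroup (M i)] [∀ i, Module k (M i)]
    [∀ i, AddCommGroup (N i)] [∀ i, Module k (N i)]
    (A : WeakLie3 k L) (B : WeakLie3 k M) (C : WeakLie3 k N)
    (f1 : MMap L M 1 0) (f2 : MMap L M 2 1) (f21 : MMap L M 2 2) (f3 : MMap L M 3 2)
    (hf : IsWeakMorphism k A B f1 f2 f21 f3)
    (f1' : MMap M N 1 0) (f2' : MMap M N 2 1) (f21' : MMap M N 2 2) (f3' : MMap M N 3 2)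
    (hf' : IsWeakMorphism k B C f1' f2' f21' f3') :
    IsWeakMorphism k A C (cmp1 f1' f1) (cmp2 f1' f2' f1 f2) (cmp21 f1' f21' f1 f21)
      (cmp3 f1' f2' f3' f1 f2 f3) := by
  exact (isWeakMorphism_iff A C).2 (composition_of_weak_morphisms_general
    ((isWeakMorphism_iff A B).1 hf) ((isWeakMorphism_iff B C).1 hf'))

end WL3
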